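/- arXiv:2206.05043 — 2 statements merged into one kernel-verified Lean document; each statement's English description precedes it below -/
import Mathlib

section
/- There exists a constant C > 0 such that the following holds. For each n ≥ 2, let a : Fin n → Fin n be a uniformly random function (the values a(i) chosen independently and uniformly from Fin n), and let b, c be independent uniformly random permutations of Fin n, with a, b, c mutually independent. Consider the deterministic automaton on state set Fin n with three letters acting by a, b, c. Then the probability that this automaton is synchronizing and admits a synchronizing word of length at most C · √(n · (log n)^3) tends to 1 as n → ∞. -/
/-- The action of a word (a list of letters, each acting as a function on the
state set), applied in order: the first letter of the list acts first. -/
def wordAction {Q : Type*} (w : List (Q → Q)) (q : Q) : Q :=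
  w.foldl (fun s f => f s) q

/-- A word is synchronizing if its action sends every state to one common state. -/
def IsSyncWord {Q : Type*} (w : List (Q → Q)) : Prop :=
  ∃ S : Q, ∀ T : Q, wordAction w T = S

/-!
The iterate `a^[t]` with `t ≈ 2 √(n log n)` typically has at most `√(n log n)` values: with high
probability every orbit of `a` has entered its cycle after `t` steps, and the expected number of
periodic points is at most `2 √n`. It remains to merge these values one at a time, each at a cost
of `O(log n)` letters. For this, a word over `b` and `c` carries a given pair of states to a pair
on which `a` is not injective.

Such a word of length `O(log n)` exists because the random walk driven by blocks of `k = O(log n)`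
random letters mixes on ordered pairs. The squared Frobenius norm of its transition matrix `M` is
the expected number of pairs on which two random words of length `k` agree, and `M` is close to the
uniform matrix as soon as this number is close to `1`. Two distinct words may be assumed to differ
in their first and last letters. Reveal the values of `b` and `c` along the two trajectories of
each of the two points. In the graph of revealed edges every vertex has degree at least two when
the words agree on the pair, so counting edges shows that at least two of the fresh queries return
a vertex already seen. If there are exactly two, all queries are fresh and the coincidences occur
at the two end points, which has probability about `1 / n ^ 2`; three coincidences are unlikely.
-/

namespace RandomAutomaton

open Finset Function Equiv
open scoped BigOperators

/-! ### Uniform probability -/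

section UniformProbability

variable {Ω Ω' ι : Type*}

/-- The probability of the event `P` under the uniform distribution on the finite type `Ω`. -/
noncomputable def prob (P : Ω → Prop) : ℝ := Nat.card {ω // P ω} / Nat.card Ω

theorem prob_eq_expect [Fintype Ω] (P : Ω → Prop) [DecidablePred P] :
    prob P = 𝔼 ω, if P ω then (1 : ℝ) else 0 := by
  rw [prob, Fintype.expect_eq_sum_div_card, sum_boole, Nat.card_eq_fintype_card,
    Nat.card_eq_fintype_card, Fintype.card_subtype]

theorem prob_nonneg (P : Ω → Prop) : 0 ≤ prob P := by
  unfold prob; positivity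

theorem prob_mono [Finite Ω] {P Q : Ω → Prop} (h : ∀ ω, P ω → Q ω) : prob P ≤ prob Q := by
  unfold prob
  gcongr
  exact Nat.card_mono (Set.toFinite {ω | Q ω}) h

theorem prob_le_one [Finite Ω] (P : Ω → Prop) : prob P ≤ 1 :=
  div_le_one_of_le₀ (mod_cast Finite.card_subtype_le P) (by positivity)

theorem prob_true [Finite Ω] [Nonempty Ω] : prob (fun _ : Ω ↦ True) = 1 := by
  rw [prob, Nat.card_congr (Equiv.subtypeUnivEquiv fun _ ↦ trivial), div_self]
  exact_mod_cast Nat.card_pos.ne'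

theorem prob_or_le [Finite Ω] (P Q : Ω → Prop) :
    prob (fun ω ↦ P ω ∨ Q ω) ≤ prob P + prob Q := by
  unfold prob
  rw [← add_div]
  gcongr
  exact_mod_cast Set.ncard_union_le {ω | P ω} {ω | Q ω}

theorem prob_exists_le [Finite Ω] (s : Finset ι) (P : ι → Ω → Prop) :
    prob (fun ω ↦ ∃ i ∈ s, P i ω) ≤ ∑ i ∈ s, prob (P i) := by
  classical
  induction s using Finset.induction_on with
  | empty => simp [prob]
  | insert i s hi ih =>
    simp only [exists_mem_insert, sum_insert hi]
    exact (prob_or_le _ _).trans (add_le_add_right ih _)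

theorem one_le_prob_add_prob_not [Finite Ω] [Nonempty Ω] (P : Ω → Prop) :
    1 ≤ prob P + prob (fun ω ↦ ¬ P ω) := by
  rw [← prob_true (Ω := Ω)]
  exact (prob_mono fun ω _ ↦ Classical.em (P ω)).trans (prob_or_le _ _)

theorem prob_comp_equiv (e : Ω ≃ Ω') (P : Ω' → Prop) : prob (fun ω ↦ P (e ω)) = prob P := by
  rw [prob, prob, Nat.card_congr e, Nat.card_congr (e.subtypeEquiv fun _ ↦ Iff.rfl)]

theorem prob_fst [Finite Ω'] [Nonempty Ω'] (P : Ω → Prop) :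
    prob (fun x : Ω × Ω' ↦ P x.1) = prob P := by
  rw [prob, prob, Nat.card_congr Equiv.prodSubtypeFstEquivSubtypeProd, Nat.card_prod, Nat.card_prod,
    Nat.cast_mul, Nat.cast_mul, mul_div_mul_right]
  exact_mod_cast Nat.card_pos.ne'

theorem prob_snd [Finite Ω] [Nonempty Ω] (P : Ω' → Prop) :
    prob (fun x : Ω × Ω' ↦ P x.2) = prob P := by
  rw [← prob_fst (Ω' := Ω) P, ← prob_comp_equiv (Equiv.prodComm Ω Ω')]
  rfl

theorem mul_prob_lt_le_expect [Fintype Ω] {f : Ω → ℝ} (hf : ∀ ω, 0 ≤ f ω) (r : ℝ) :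
    r * prob (fun ω ↦ r < f ω) ≤ 𝔼 ω, f ω := by
  classical
  rw [prob_eq_expect, mul_expect]
  refine expect_le_expect fun ω _ ↦ ?_
  split_ifs with h
  · simpa using h.le
  · simpa using hf ω

theorem expect_card_filter [Fintype Ω] (s : Finset ι) (P : ι → Ω → Prop)
    [∀ ω, DecidablePred fun i ↦ P i ω] :
    𝔼 ω, (#{i ∈ s | P i ω} : ℝ) = ∑ i ∈ s, prob (P i) := by
  classical
  simp only [prob_eq_expect, card_filter, Nat.cast_sum, Nat.cast_ite, Nat.cast_one, Nat.cast_zero]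
  exact expect_sum_comm _ _ _

/- Double counting of the pairs `(ω, y)` with `P ω` and `y ∈ B ω`: the pair `(g ω y, v ω)`, made of
the outcome with its value `v` resampled to `y` and of the erased value, determines `(ω, y)`. -/
theorem prob_mul_le_of_resample [Finite Ω] {Y : Type*} {P P' : Ω → Prop} (g : Ω → Y → Ω)
    (v : Ω → Y) (B A : Ω → Finset Y) {b m : ℕ} (hb : ∀ ω, P ω → b ≤ #(B ω))
    (hm : ∀ ω, P' ω → #(A ω) ≤ m)
    (hg : ∀ ω, P ω → ∀ y ∈ B ω, P' (g ω y) ∧ v ω ∈ A (g ω y))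
    (hgv : ∀ ω, P ω → ∀ y ∈ B ω, v (g ω y) = y ∧ g (g ω y) (v ω) = ω) :
    prob P * b ≤ m * prob P' := by
  classical
  cases nonempty_fintype Ω
  have card_le : #{ω | P ω} * b ≤ m * #{ω | P' ω} := calc
    _ ≤ #(Finset.sigma {ω | P ω} B) := by
      rw [card_sigma]
      exact card_nsmul_le_sum _ _ _ fun ω hω ↦ hb ω (mem_filter.1 hω).2
    _ ≤ #(Finset.sigma {ω | P' ω} A) := by
      refine card_le_card_of_injOn (fun p ↦ ⟨g p.1 p.2, v p.1⟩) ?_ ?_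
      · rintro ⟨ω, y⟩ h
        simp only [coe_sigma, Set.mem_sigma_iff, mem_coe, mem_filter_univ] at h ⊢
        exact hg ω h.1 y h.2
      · rintro ⟨ω, y⟩ h ⟨ω', y'⟩ h' heq
        simp only [coe_sigma, Set.mem_sigma_iff, mem_coe, mem_filter_univ] at h h'
        simp only [Sigma.mk.injEq, heq_eq_eq] at heq ⊢
        obtain ⟨hy, hω⟩ := hgv ω h.1 y h.2
        obtain ⟨hy', hω'⟩ := hgv ω' h'.1 y' h'.2
        exact ⟨by rw [← hω, ← hω', heq.1, heq.2], by rw [← hy, ← hy', heq.1]⟩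
    _ ≤ m * #{ω | P' ω} := by
      rw [card_sigma, mul_comm]
      exact sum_le_card_nsmul _ _ _ fun ω hω ↦ hm ω (mem_filter.1 hω).2
  rw [prob, prob, div_mul_eq_mul_div, mul_div_assoc']
  simp only [Nat.card_eq_fintype_card, Fintype.card_subtype]
  exact div_le_div_of_nonneg_right (mod_cast card_le) (Nat.cast_nonneg _)

end UniformProbability

/-! ### Words and synchronization -/

section Words

variable {Q : Type*}

/-- The transformations of `Q` by which the words of length at most `r` over `L` act. -/
def wordMaps (L : Set (Q → Q)) (r : ℕ) : Set (Q → Q) :=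
  {f | ∃ w : List (Q → Q), (∀ a ∈ w, a ∈ L) ∧ w.length ≤ r ∧ wordAction w = f}

/-- Bounded 2-transitivity: words of length at most `r` over `L` carry every ordered pair of
distinct states to every other one. -/
def IsTwoTransitiveWithin (L : Set (Q → Q)) (r : ℕ) : Prop :=
  ∀ p q p' q', p ≠ q → p' ≠ q' → ∃ f ∈ wordMaps L r, f p = p' ∧ f q = q'

variable {L : Set (Q → Q)} {f g : Q → Q} {r s : ℕ}

theorem id_mem_wordMaps : id ∈ wordMaps L 0 := ⟨[], by simp, le_rfl, rfl⟩

theorem mem_wordMaps_one (hf : f ∈ L) : f ∈ wordMaps L 1 := ⟨[f], by simpa, le_rfl, rfl⟩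

theorem wordMaps_mono (hrs : r ≤ s) : wordMaps L r ⊆ wordMaps L s :=
  fun _ ⟨w, hw, hlen, h⟩ ↦ ⟨w, hw, hlen.trans hrs, h⟩

theorem wordMaps_subset {L' : Set (Q → Q)} (hL : L ⊆ L') : wordMaps L r ⊆ wordMaps L' r :=
  fun _ ⟨w, hw, h⟩ ↦ ⟨w, fun a ha ↦ hL (hw a ha), h⟩

theorem IsTwoTransitiveWithin.mono {L' : Set (Q → Q)} (h : IsTwoTransitiveWithin L r)
    (hL : L ⊆ L') : IsTwoTransitiveWithin L' r := fun p q p' q' hpq hpq' ↦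
  let ⟨f, hf, hfpq⟩ := h p q p' q' hpq hpq'
  ⟨f, wordMaps_subset hL hf, hfpq⟩

theorem comp_mem_wordMaps (hf : f ∈ wordMaps L r) (hg : g ∈ wordMaps L s) :
    g ∘ f ∈ wordMaps L (s + r) := by
  obtain ⟨v, hv, hvlen, rfl⟩ := hf
  obtain ⟨w, hw, hwlen, rfl⟩ := hg
  refine ⟨v ++ w, by simpa [or_imp, forall_and] using ⟨hv, hw⟩, ?_, ?_⟩
  · rw [List.length_append]
    lia
  · ext q
    simp [wordAction, List.foldl_append]

theorem iterate_mem_wordMaps (hf : f ∈ L) (t : ℕ) : f^[t] ∈ wordMaps L t := by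
  induction t with
  | zero => exact id_mem_wordMaps
  | succ t ih => exact comp_mem_wordMaps (mem_wordMaps_one hf) ih

theorem list_prod_mem_wordMaps {l : List (Perm Q)} (hl : ∀ π ∈ l, ⇑π ∈ wordMaps L r) :
    ⇑l.prod ∈ wordMaps L (l.length * r) := by
  induction l with
  | nil => simpa using id_mem_wordMaps
  | cons π l ih =>
    rw [List.forall_mem_cons] at hl
    rw [List.prod_cons, List.length_cons, add_one_mul, add_comm]
    exact comp_mem_wordMaps (f := ⇑l.prod) (ih hl.2) hl.1

theorem exists_wordMap_eq_of_card_le {e : ℕ} (hmerge : ∀ p q, ∃ f ∈ wordMaps L e, f p = f q)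
    (m : ℕ) (S : Finset Q) (hS : #S ≤ m + 1) :
    ∃ f ∈ wordMaps L (m * e), ∀ p ∈ S, ∀ q ∈ S, f p = f q := by
  classical
  induction m generalizing S with
  | zero =>
    exact ⟨id, by simpa using id_mem_wordMaps, fun p hp q hq ↦ card_le_one.1 hS p hp q hq⟩
  | succ m ih =>
    obtain hS1 | hS1 := le_or_gt #S 1
    · exact ⟨id, wordMaps_mono (Nat.zero_le _) id_mem_wordMaps, card_le_one.1 hS1⟩
    · obtain ⟨p, hp, q, hq, hpq⟩ := one_lt_card.1 hS1
      obtain ⟨f, hf, hfpq⟩ := hmerge p q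
      have hlt : #(S.image f) < #S := lt_of_le_of_ne card_image_le fun h ↦
        hpq (card_image_iff.1 h hp hq hfpq)
      obtain ⟨g, hg, hconst⟩ := ih (S.image f) (by lia)
      refine ⟨g ∘ f, add_one_mul m e ▸ comp_mem_wordMaps hf hg, fun p hp q hq ↦ ?_⟩
      exact hconst _ (mem_image_of_mem f hp) _ (mem_image_of_mem f hq)

theorem exists_isSyncWord [Fintype Q] [DecidableEq Q] {a : Q → Q} {t m d : ℕ}
    (ha : a ∈ L) (himage : #(univ.image a^[t]) ≤ m) (hm : m < Fintype.card Q)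
    (htrans : IsTwoTransitiveWithin L d) :
    ∃ w : List (Q → Q), (∀ f ∈ w, f ∈ L) ∧ w.length ≤ m * (d + 1) + t ∧ IsSyncWord w := by
  have not_injective : ¬ Injective a := fun h ↦ by
    rw [card_image_of_injective _ (h.iterate t), card_univ] at himage
    lia
  obtain ⟨p', q', hpq', hne'⟩ := not_injective_iff.1 not_injective
  have merge (p q : Q) : ∃ f ∈ wordMaps L (d + 1), f p = f q := by
    obtain rfl | hne := eq_or_ne p q
    · exact ⟨id, wordMaps_mono (Nat.zero_le _) id_mem_wordMaps, rfl⟩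
    · obtain ⟨f, hf, rfl, rfl⟩ := htrans p q p' q' hne hne'
      exact ⟨a ∘ f, add_comm d 1 ▸ comp_mem_wordMaps hf (mem_wordMaps_one ha), hpq'⟩
  obtain ⟨f, hf, hconst⟩ := exists_wordMap_eq_of_card_le merge m _ (himage.trans m.le_succ)
  obtain ⟨w, hw, hlen, heq⟩ := comp_mem_wordMaps (iterate_mem_wordMaps ha t) hf
  obtain ⟨q⟩ := Fintype.card_pos_iff.1 (pos_of_gt hm)
  refine ⟨w, hw, hlen, f (a^[t] q), fun p ↦ ?_⟩
  rw [heq]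
  exact hconst _ (mem_image_of_mem _ (mem_univ p)) _ (mem_image_of_mem _ (mem_univ q))

end Words

/-! ### Adaptive exploration of random permutations -/

section Exploration

variable {κ α τ β : Type*}

/-- The answer to the query asked at time `t`. An exploration is encoded by the function
`query σ t = (c, z)`, meaning that at time `t` it asks for the value of `σ c` at `z`. -/
def answer (query : (κ → Perm α) → τ → κ × α) (σ : κ → Perm α) (t : τ) : α :=
  σ (query σ t).1 (query σ t).2

section Resample

variable [DecidableEq κ] [DecidableEq α]
  {query : (κ → Perm α) → τ → κ × α} {σ : κ → Perm α} {t : τ}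

/-- Change the permutation queried at time `t` so that the answer becomes `y`. -/
def resample (query : (κ → Perm α) → τ → κ × α) (t : τ) (σ : κ → Perm α) (y : α) : κ → Perm α :=
  update σ (query σ t).1 (swap (answer query σ t) y * σ (query σ t).1)

theorem resample_apply_query (y : α) :
    resample query t σ y (query σ t).1 (query σ t).2 = y := by
  simp [resample, answer]

theorem resample_apply_of_ne {y : α} {q : κ × α} (hq : q ≠ query σ t) (hy : σ q.1 q.2 ≠ y) :
    resample query t σ y q.1 q.2 = σ q.1 q.2 := by
  obtain ⟨c, z⟩ := q
  obtain rfl | hc := eq_or_ne c (query σ t).1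
  · have hz : z ≠ (query σ t).2 := fun h ↦ hq (Prod.ext rfl h)
    simp only [resample, update_self, Perm.mul_apply]
    exact swap_apply_of_ne_of_ne (fun h ↦ hz ((σ _).injective h)) hy
  · simp [resample, hc]

end Resample

variable [LinearOrder τ]

/-- The exploration of `σ` and that of `σ'` are identical before time `t`. -/
def SameHistory (query : (κ → Perm α) → τ → κ × α) (t : τ) (σ σ' : κ → Perm α) : Prop :=
  ∀ s < t, query σ s = query σ' s ∧ answer query σ s = answer query σ' s

/-- The process `f` is predictable: its value at time `t` is determined by the answers received
before time `t`. A genuine exploration is one whose queries are themselves predictable. -/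
def IsPredictable (query : (κ → Perm α) → τ → κ × α) (f : (κ → Perm α) → τ → β) : Prop :=
  ∀ t σ σ', SameHistory query t σ σ' → f σ t = f σ' t

/-- The query asked at time `t` has not been asked before. -/
def IsFresh (query : (κ → Perm α) → τ → κ × α) (σ : κ → Perm α) (t : τ) : Prop :=
  ∀ s < t, query σ s ≠ query σ t

variable {query : (κ → Perm α) → τ → κ × α} {σ σ' : κ → Perm α} {s t : τ}

theorem SameHistory.mono (h : SameHistory query t σ σ') (hst : s ≤ t) :
    SameHistory query s σ σ' :=
  fun r hr ↦ h r (hr.trans_le hst)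

theorem SameHistory.query_eq (hq : IsPredictable query query) (h : SameHistory query t σ σ') :
    query σ t = query σ' t :=
  hq t σ σ' h

theorem SameHistory.isFresh (hq : IsPredictable query query) (h : SameHistory query t σ σ')
    (hf : IsFresh query σ t) : IsFresh query σ' t := fun r hr ↦ by
  rw [← (h r hr).1, ← h.query_eq hq]
  exact hf r hr

open Classical in
/-- The times at which a fresh query leads back to the starting set `V` or to an earlier answer,
rather than to a new point. -/
noncomputable def coincidences [DecidableEq α] [Fintype τ] (query : (κ → Perm α) → τ → κ × α)
    (V : Finset α) (σ : κ → Perm α) : Finset τ :=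
  {t : τ | IsFresh query σ t ∧ answer query σ t ∈ V ∪ image (answer query σ) {s | s < t}}

theorem mem_coincidences [DecidableEq α] [Fintype τ] {V : Finset α} : t ∈ coincidences query V σ ↔
    IsFresh query σ t ∧ (answer query σ t ∈ V ∨ ∃ s < t, answer query σ s = answer query σ t) := by
  simp [coincidences]

theorem card_image_query_add_card_le [DecidableEq κ] [DecidableEq α] [Fintype τ]
    (query : (κ → Perm α) → τ → κ × α) (V : Finset α) (σ : κ → Perm α) :
    #(image (query σ) univ) + #V ≤
      #(V ∪ image (answer query σ) univ) + #(coincidences query V σ) := by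
  classical
  set F : Finset τ := {t | IsFresh query σ t}
  set K := coincidences query V σ
  have card_queries : #(image (query σ) univ) ≤ #F := by
    refine (card_le_card fun q hq ↦ ?_).trans (card_image_le (f := query σ))
    obtain ⟨t, ht, hmin⟩ := exists_minimal (s := {t | query σ t = q})
      (by simpa [Finset.Nonempty] using hq)
    simp only [mem_filter_univ] at ht hmin
    refine mem_image.2 ⟨t, ?_, ht⟩
    exact (mem_filter_univ _).2 fun s hs hst ↦ hs.not_ge (hmin (hst.trans ht) hs.le)
  have new {t : τ} (ht : t ∈ F \ K) :
      answer query σ t ∉ V ∧ ∀ s < t, answer query σ s ≠ answer query σ t := by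
    simp only [F, K, mem_sdiff, mem_filter_univ, mem_coincidences, not_and, not_or,
      not_exists] at ht
    exact ht.2 ht.1
  have card_new : #(image (answer query σ) (F \ K)) = #(F \ K) := by
    refine card_image_of_injOn fun s hs t ht hst ↦ ?_
    rcases lt_trichotomy s t with h | h | h
    exacts [((new ht).2 s h hst).elim, h, ((new hs).2 t h hst.symm).elim]
  have disjoint_new : Disjoint V (image (answer query σ) (F \ K)) := by
    simp only [disjoint_right, forall_mem_image]
    exact fun t ht ↦ (new ht).1
  calc #(image (query σ) univ) + #V ≤ #(F \ K) + #K + #V := by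
        grw [card_queries, card_le_card_sdiff_add_card (s := F) (t := K)]
    _ = #(V ∪ image (answer query σ) (F \ K)) + #K := by
        rw [card_union_of_disjoint disjoint_new, card_new]; ring
    _ ≤ _ := by gcongr; exact subset_univ _

section ResampleHistory

variable [DecidableEq κ] [DecidableEq α]

theorem answer_resample {y : α} (hq : IsPredictable query query)
    (h : SameHistory query t σ (resample query t σ y)) :
    answer query (resample query t σ y) t = y := by
  rw [answer, ← h.query_eq hq, resample_apply_query]

theorem resample_resample {y : α} (hq : IsPredictable query query)
    (h : SameHistory query t σ (resample query t σ y)) :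
    resample query t (resample query t σ y) (answer query σ t) = σ := by
  have hy := answer_resample hq h
  conv_lhs => rw [resample, hy, ← h.query_eq hq]
  simp only [resample, update_self, update_idem]
  rw [swap_comm y, swap_mul_self_mul, update_eq_self]

theorem sameHistory_resample [WellFoundedLT τ] (hq : IsPredictable query query)
    (hf : IsFresh query σ t) {y : α} (hy : ∀ s < t, answer query σ s ≠ y) :
    SameHistory query t σ (resample query t σ y) := by
  intro s
  induction s using WellFoundedLT.induction with
  | ind s ih =>
    intro hst
    have hqs : query σ s = query (resample query t σ y) s :=
      SameHistory.query_eq hq fun r hr ↦ ih r hr (hr.trans hst)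
    refine ⟨hqs, ?_⟩
    rw [answer, answer, ← hqs, resample_apply_of_ne (hf s hst) (hy s hst)]

end ResampleHistory

variable [Fintype τ] [Fintype α] [Finite κ]

theorem prob_and_isFresh_and_answer_mem_mul_le (hq : IsPredictable query query)
    {A : (κ → Perm α) → τ → Finset α} (hA : IsPredictable query A) {m : ℕ}
    (hm : ∀ σ, #(A σ t) ≤ m) {P : (κ → Perm α) → Prop}
    (hP : ∀ σ σ', SameHistory query t σ σ' → P σ → P σ') :
    prob (fun σ ↦ P σ ∧ IsFresh query σ t ∧ answer query σ t ∈ A σ t)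
      * (Fintype.card α - Fintype.card τ : ℕ) ≤ m * prob P := by
  classical
  have history : ∀ σ, IsFresh query σ t → ∀ y ∈ (image (answer query σ) {s | s < t})ᶜ,
      SameHistory query t σ (resample query t σ y) := fun σ hf y hy ↦
    sameHistory_resample hq hf (by simpa using hy)
  refine prob_mul_le_of_resample (resample query t) (fun σ ↦ answer query σ t)
    (fun σ ↦ (image (answer query σ) {s | s < t})ᶜ) (fun σ ↦ A σ t)
    (fun σ _ ↦ ?_) (fun σ _ ↦ hm σ) (fun σ h y hy ↦ ?_) (fun σ h y hy ↦ ?_)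
  · rw [card_compl]
    exact Nat.sub_le_sub_left (card_image_le.trans (card_le_univ _)) _
  · have hσ := history σ h.2.1 y hy
    exact ⟨hP _ _ hσ h.1, hA t _ _ hσ ▸ h.2.2⟩
  · have hσ := history σ h.2.1 y hy
    exact ⟨answer_resample hq hσ, resample_resample hq hσ⟩

theorem prob_forall_isFresh_and_answer_mem_mul_le (hq : IsPredictable query query)
    {A : (κ → Perm α) → τ → Finset α} (hA : IsPredictable query A) {m : ℕ} (I : Finset τ)
    (hm : ∀ σ, ∀ t ∈ I, #(A σ t) ≤ m) :
    prob (fun σ ↦ ∀ t ∈ I, IsFresh query σ t ∧ answer query σ t ∈ A σ t)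
      * (Fintype.card α - Fintype.card τ : ℕ) ^ #I ≤ m ^ #I := by
  induction I using Finset.induction_on_max with
  | empty => simpa using prob_le_one _
  | insert t I hlt ih =>
    have ih := ih fun σ s hs ↦ hm σ s (mem_insert_of_mem hs)
    have determined : ∀ σ σ', SameHistory query t σ σ' →
        (∀ s ∈ I, IsFresh query σ s ∧ answer query σ s ∈ A σ s) →
        ∀ s ∈ I, IsFresh query σ' s ∧ answer query σ' s ∈ A σ' s := by
      intro σ σ' h hσ s hs
      have hs' := h.mono (hlt s hs).le
      rw [← (h s (hlt s hs)).2, ← hA s _ _ hs']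
      exact ⟨hs'.isFresh hq (hσ s hs).1, (hσ s hs).2⟩
    have step := prob_and_isFresh_and_answer_mem_mul_le hq hA
      (fun σ ↦ hm σ t (mem_insert_self _ _)) determined
    rw [card_insert_of_notMem fun h ↦ (hlt t h).false, pow_succ, pow_succ, ← mul_assoc,
      mul_right_comm]
    simp only [forall_mem_insert, and_comm (b := ∀ _ ∈ I, _)]
    calc _ ≤ m * prob _ * (Fintype.card α - Fintype.card τ : ℕ) ^ #I := by gcongr
      _ ≤ m ^ #I * m := by rw [mul_assoc, mul_comm]; gcongr

theorem prob_le_card_coincidences_mul_le [DecidableEq α] (hq : IsPredictable query query)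
    (V : Finset α) (r : ℕ) :
    prob (fun σ ↦ r ≤ #(coincidences query V σ)) * (Fintype.card α - Fintype.card τ : ℕ) ^ r ≤
      (Fintype.card τ * (Fintype.card τ + #V) : ℕ) ^ r := by
  set A : (κ → Perm α) → τ → Finset α := fun σ t ↦ V ∪ image (answer query σ) {s | s < t}
  have hA : IsPredictable query A := fun t σ σ' h ↦
    congrArg (V ∪ ·) (image_congr fun s hs ↦ (h s (by simpa using hs)).2)
  have card_A (σ : κ → Perm α) (t : τ) : #(A σ t) ≤ Fintype.card τ + #V := by
    rw [add_comm]
    exact (card_union_le _ _).trans (by gcongr; exact card_image_le.trans (card_le_univ _))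
  have union_bound : prob (fun σ ↦ r ≤ #(coincidences query V σ)) ≤
      ∑ I ∈ powersetCard r univ,
        prob (fun σ ↦ ∀ t ∈ I, IsFresh query σ t ∧ answer query σ t ∈ A σ t) := by
    refine (prob_mono fun σ hσ ↦ ?_).trans (prob_exists_le _ _)
    obtain ⟨I, hI, hcard⟩ := exists_subset_card_eq hσ
    refine ⟨I, mem_powersetCard_univ.2 hcard, fun t ht ↦ ?_⟩
    simpa [A] using mem_coincidences.1 (hI ht)
  calc _ ≤ ∑ _I ∈ powersetCard r (univ : Finset τ), ((Fintype.card τ + #V : ℕ) : ℝ) ^ r := by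
        grw [union_bound]
        rw [sum_mul]
        refine sum_le_sum fun I hI ↦ ?_
        rw [← mem_powersetCard_univ.1 hI]
        exact prob_forall_isFresh_and_answer_mem_mul_le hq hA I fun σ t _ ↦ card_A σ t
    _ ≤ (Fintype.card τ * (Fintype.card τ + #V) : ℕ) ^ r := by
        rw [sum_const, card_powersetCard, card_univ, nsmul_eq_mul, Nat.cast_mul, mul_pow]
        gcongr
        exact_mod_cast Nat.choose_le_pow _ _

end Exploration

/-! ### Collisions of two walks -/

section Collision

variable {κ α ι : Type*}

/-- The permutation obtained by applying the first `j` letters of the word `u`. -/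
def walk (σ : κ → Perm α) (u : ℕ → κ) : ℕ → Perm α
  | 0 => 1
  | j + 1 => σ (u j) * walk σ u j

/-- The edges of `E` leaving the vertex `z`, where `(c, y)` encodes the edge from `y` to `σ c y`. -/
def outEdges [DecidableEq α] (E : Finset (κ × α)) (z : α) : Finset (κ × α) := {e ∈ E | e.2 = z}

/-- The edges of `E` entering the vertex `z`, where `(c, y)` encodes the edge from `y` to
`σ c y`. -/
def inEdges [DecidableEq α] (σ : κ → Perm α) (E : Finset (κ × α)) (z : α) : Finset (κ × α) :=
  {e ∈ E | σ e.1 e.2 = z}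

theorem sum_card_filter_eq_le [DecidableEq α] (V : Finset α) (E : Finset ι) (f : ι → α) :
    ∑ z ∈ V, #{e ∈ E | f e = z} ≤ #E := by
  classical
  rw [← card_biUnion (Set.pairwiseDisjoint_filter f V E)]
  exact card_le_card (biUnion_subset.2 fun _ _ ↦ filter_subset _ _)

theorem card_outEdges_add_card_inEdges_eq_two [DecidableEq α] {σ : κ → Perm α}
    {E : Finset (κ × α)} {V : Finset α} (hEV : #E ≤ #V)
    (hdeg : ∀ z ∈ V, 2 ≤ #(outEdges E z) + #(inEdges σ E z)) {z : α} (hz : z ∈ V) :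
    #(outEdges E z) + #(inEdges σ E z) = 2 := by
  have sum_out : ∑ z ∈ V, #(outEdges E z) ≤ #E := sum_card_filter_eq_le V E _
  have sum_in : ∑ z ∈ V, #(inEdges σ E z) ≤ #E := sum_card_filter_eq_le V E _
  have sum_eq : ∑ _z ∈ V, 2 = ∑ z ∈ V, (#(outEdges E z) + #(inEdges σ E z)) := by
    refine le_antisymm (sum_le_sum hdeg) ?_
    rw [sum_add_distrib, sum_const, smul_eq_mul]
    lia
  exact ((sum_eq_sum_iff_of_le hdeg).1 sum_eq z hz).symm

/-- The exploration that reveals, for all `x i` in parallel, the walks from `x i` along the two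
words `w false` and `w true`: at time `(j, i, b)` it applies the letter `w b j`. The times are
ordered lexicographically. -/
def pairQuery (l : ℕ) (w : Bool → ℕ → κ) (x : ι → α) (σ : κ → Perm α)
    (t : Fin (l + 1) ×ₗ ι ×ₗ Bool) : κ × α :=
  let (j, s) := ofLex t
  let (i, b) := ofLex s
  (w b j, walk σ (w b) j (x i))

theorem isPredictable_pairQuery [LinearOrder ι] (l : ℕ) (w : Bool → ℕ → κ) (x : ι → α) :
    IsPredictable (pairQuery l w x) (pairQuery l w x) := by
  intro t σ σ' h
  obtain ⟨⟨j, hj⟩, i, b⟩ := t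
  refine Prod.ext rfl ?_
  cases j with
  | zero => rfl
  | succ j =>
    exact (h (toLex (⟨j, by lia⟩, toLex (i, b))) (Prod.Lex.left _ _ (by simp))).2

section CollisionGraph

variable [DecidableEq α] [Fintype ι] (l : ℕ) (w : Bool → ℕ → κ) (x : ι ↪ α) (σ : κ → Perm α)

/-- The vertices of the graph formed by the walks from all the `x i` along the two words. -/
def collisionVertices : Finset α :=
  univ.map x ∪ image (answer (pairQuery l w x) σ) univ

/-- The edges of the graph formed by the walks from all the `x i` along the two words. -/
def collisionEdges [DecidableEq κ] : Finset (κ × α) :=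
  image (pairQuery l w x σ) univ

variable {l w x σ}

theorem mem_collisionVertices {z : α} :
    z ∈ collisionVertices l w x σ ↔ ∃ i b, ∃ j ≤ l + 1, walk σ (w b) j (x i) = z := by
  simp only [collisionVertices, mem_union, mem_map, mem_image, mem_univ, true_and]
  constructor
  · rintro (⟨i, rfl⟩ | ⟨⟨j, i, b⟩, rfl⟩)
    exacts [⟨i, true, 0, by lia, rfl⟩, ⟨i, b, j + 1, by lia, rfl⟩]
  · rintro ⟨i, b, _ | j, hj, rfl⟩
    exacts [Or.inl ⟨i, rfl⟩, Or.inr ⟨toLex (⟨j, hj⟩, toLex (i, b)), rfl⟩]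

section Degree

variable [DecidableEq κ]

theorem walk_mem_collisionEdges (i : ι) (b : Bool) {j : ℕ} (hj : j ≤ l) :
    (w b j, walk σ (w b) j (x i)) ∈ collisionEdges l w x σ :=
  mem_image.2 ⟨toLex (⟨j, by lia⟩, toLex (i, b)), mem_univ _, rfl⟩

theorem walk_mem_outEdges (i : ι) (b : Bool) {j : ℕ} (hj : j ≤ l) :
    (w b j, walk σ (w b) j (x i)) ∈
      outEdges (collisionEdges l w x σ) (walk σ (w b) j (x i)) :=
  mem_filter.2 ⟨walk_mem_collisionEdges i b hj, rfl⟩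

theorem walk_mem_inEdges (i : ι) (b : Bool) {j : ℕ} (hj : j ≤ l) :
    (w b j, walk σ (w b) j (x i)) ∈
      inEdges σ (collisionEdges l w x σ) (walk σ (w b) (j + 1) (x i)) :=
  mem_filter.2 ⟨walk_mem_collisionEdges i b hj, rfl⟩

theorem two_le_card_outEdges_start (h0 : w true 0 ≠ w false 0) (i : ι) :
    2 ≤ #(outEdges (collisionEdges l w x σ) (x i)) :=
  one_lt_card.2 ⟨_, walk_mem_outEdges i true l.zero_le, _, walk_mem_outEdges i false l.zero_le,
    fun h ↦ h0 (congrArg Prod.fst h)⟩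

theorem two_le_card_inEdges_end (hl : w true l ≠ w false l)
    (hcol : ∀ i, walk σ (w true) (l + 1) (x i) = walk σ (w false) (l + 1) (x i))
    (i : ι) (b : Bool) :
    2 ≤ #(inEdges σ (collisionEdges l w x σ) (walk σ (w b) (l + 1) (x i))) := by
  have hb (b' : Bool) : walk σ (w b) (l + 1) (x i) = walk σ (w b') (l + 1) (x i) := by
    cases b <;> cases b' <;> simp [hcol i]
  exact one_lt_card.2 ⟨(w true l, _), hb true ▸ walk_mem_inEdges i true le_rfl,
    (w false l, _), hb false ▸ walk_mem_inEdges i false le_rfl, fun h ↦ hl (congrArg Prod.fst h)⟩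

theorem two_le_degree (h0 : w true 0 ≠ w false 0) (hl : w true l ≠ w false l)
    (hcol : ∀ i, walk σ (w true) (l + 1) (x i) = walk σ (w false) (l + 1) (x i)) {z : α}
    (hz : z ∈ collisionVertices l w x σ) :
    2 ≤ #(outEdges (collisionEdges l w x σ) z) + #(inEdges σ (collisionEdges l w x σ) z) := by
  obtain ⟨i, b, j, hj, rfl⟩ := mem_collisionVertices.1 hz
  obtain rfl | hj := hj.eq_or_lt
  · grw [← two_le_card_inEdges_end hl hcol i b]
    exact Nat.le_add_left _ _
  · cases j with
    | zero => exact (two_le_card_outEdges_start h0 i).trans (Nat.le_add_right _ _)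
    | succ j =>
      have out : 0 < #(outEdges (collisionEdges l w x σ) (walk σ (w b) (j + 1) (x i))) :=
        card_pos.2 ⟨_, walk_mem_outEdges i b (by lia)⟩
      have into : 0 < #(inEdges σ (collisionEdges l w x σ) (walk σ (w b) (j + 1) (x i))) :=
        card_pos.2 ⟨_, walk_mem_inEdges i b (by lia)⟩
      lia

theorem degree_eq_two [LinearOrder ι] (h0 : w true 0 ≠ w false 0) (hl : w true l ≠ w false l)
    (hcol : ∀ i, walk σ (w true) (l + 1) (x i) = walk σ (w false) (l + 1) (x i))
    (hcoin : #(coincidences (pairQuery l w x) (univ.map x) σ) ≤ Fintype.card ι)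
    (i : ι) (b : Bool) {j : ℕ} (hj : j ≤ l) :
    #(outEdges (collisionEdges l w x σ) (walk σ (w b) j (x i)))
      + #(inEdges σ (collisionEdges l w x σ) (walk σ (w b) j (x i))) = 2 := by
  refine card_outEdges_add_card_inEdges_eq_two (V := collisionVertices l w x σ) ?_
    (fun z hz ↦ two_le_degree h0 hl hcol hz) (mem_collisionVertices.2 ⟨i, b, j, by lia, rfl⟩)
  have := card_image_query_add_card_le (pairQuery l w x) (univ.map x) σ
  rw [card_map, card_univ] at this
  exact Nat.le_of_add_le_add_right (this.trans (Nat.add_le_add_left hcoin _))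

end Degree

variable [LinearOrder ι]

theorem walk_succ_ne_start (h0 : w true 0 ≠ w false 0) (hl : w true l ≠ w false l)
    (hcol : ∀ i, walk σ (w true) (l + 1) (x i) = walk σ (w false) (l + 1) (x i))
    (hcoin : #(coincidences (pairQuery l w x) (univ.map x) σ) ≤ Fintype.card ι)
    (i i' : ι) (b : Bool) {j : ℕ} (hj : j ≤ l) : walk σ (w b) (j + 1) (x i) ≠ x i' := by
  classical
  intro h
  have out := two_le_card_outEdges_start (l := l) (x := x) (σ := σ) h0 i'
  have into : 0 < #(inEdges σ (collisionEdges l w x σ) (x i')) :=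
    card_pos.2 ⟨_, h ▸ walk_mem_inEdges i b hj⟩
  have degree := degree_eq_two h0 hl hcol hcoin i' b l.zero_le
  simp only [walk, Perm.one_apply] at degree
  lia

/- If some query were repeated, run both walks backwards from it: as every vertex has degree two and
one outgoing edge, the incoming edge is unique, so the repetition propagates down to time `0`,
where the queries are distinct. -/
theorem injective_pairQuery (h0 : w true 0 ≠ w false 0) (hl : w true l ≠ w false l)
    (hcol : ∀ i, walk σ (w true) (l + 1) (x i) = walk σ (w false) (l + 1) (x i))
    (hcoin : #(coincidences (pairQuery l w x) (univ.map x) σ) ≤ Fintype.card ι) :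
    Injective (pairQuery l w x σ) := by
  classical
  have unique (j : ℕ) : ∀ j' i i' b b', j ≤ l → j' ≤ l → w b j = w b' j' →
      walk σ (w b) j (x i) = walk σ (w b') j' (x i') → j = j' ∧ i = i' ∧ b = b' := by
    induction j with
    | zero =>
      rintro (_ | j') i i' b b' - hj' hw hx
      · refine ⟨rfl, x.injective hx, ?_⟩
        cases b <;> cases b' <;> simp_all
      · exact (walk_succ_ne_start h0 hl hcol hcoin _ _ _ (by lia) hx.symm).elim
    | succ j ih =>
      rintro (_ | j') i i' b b' hj hj' - hx
      · exact (walk_succ_ne_start h0 hl hcol hcoin _ _ _ (by lia) hx).elim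
      · have out : 0 < #(outEdges (collisionEdges l w x σ) (walk σ (w b) (j + 1) (x i))) :=
          card_pos.2 ⟨_, walk_mem_outEdges i b hj⟩
        have degree := degree_eq_two h0 hl hcol hcoin i b hj
        have into : #(inEdges σ (collisionEdges l w x σ) (walk σ (w b) (j + 1) (x i))) ≤ 1 := by
          lia
        have same_edge := card_le_one.1 into _ (walk_mem_inEdges i b (by lia)) _
          (hx ▸ walk_mem_inEdges i' b' (by lia))
        obtain ⟨hj, hib⟩ := ih j' i i' b b' (by lia) (by lia) (congrArg Prod.fst same_edge)
          (congrArg Prod.snd same_edge)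
        exact ⟨by lia, hib⟩
  rintro ⟨⟨j, hj⟩, i, b⟩ ⟨⟨j', hj'⟩, i', b'⟩ h
  obtain ⟨rfl, rfl, rfl⟩ := unique j j' i i' b b' (by lia) (by lia) (congrArg Prod.fst h)
    (congrArg Prod.snd h)
  rfl

end CollisionGraph

section CollisionProbability

/-- The bound obtained for the probability that the two walks collide at `m` points out of `n`,
with `T` queries in total: either the `m` collisions are `m` fresh coincidences at prescribed
times, or there are at least `m + 1` coincidences. -/
noncomputable def collisionBound (n T m : ℕ) : ℝ :=
  1 / (n - T : ℝ) ^ m + (T * (T + m) / (n - T : ℝ)) ^ (m + 1)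

theorem collisionBound_nonneg {n T m : ℕ} (hT : T ≤ n) : 0 ≤ collisionBound n T m := by
  have : (0 : ℝ) ≤ n - T := sub_nonneg.2 (mod_cast hT)
  unfold collisionBound
  positivity

theorem collisionBound_mono {n T T' m : ℕ} (h : T ≤ T') (hT' : T' < n) :
    collisionBound n T m ≤ collisionBound n T' m := by
  have : (0 : ℝ) < n - T' := sub_pos.2 (mod_cast hT')
  have : (0 : ℝ) ≤ n - T := sub_nonneg.2 (mod_cast (h.trans_lt hT').le)
  unfold collisionBound
  gcongr

theorem card_pairTime (l : ℕ) (ι : Type*) [Fintype ι] :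
    Fintype.card (Fin (l + 1) ×ₗ ι ×ₗ Bool) = (l + 1) * (Fintype.card ι * 2) := by
  simp

variable [Finite κ] [Fintype α] [LinearOrder ι] [Fintype ι] {l : ℕ} {w : Bool → ℕ → κ}

theorem prob_isFresh_and_meet_le (x : ι → α)
    (hT : (l + 1) * (Fintype.card ι * 2) < Fintype.card α) :
    prob (fun σ : κ → Perm α ↦ ∀ i,
        IsFresh (pairQuery l w x) σ (toLex (Fin.last l, toLex (i, true))) ∧
          walk σ (w true) (l + 1) (x i) = walk σ (w false) (l + 1) (x i)) ≤
      1 / (Fintype.card α - ((l + 1) * (Fintype.card ι * 2) : ℕ) : ℝ) ^ Fintype.card ι := by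
  set query : (κ → Perm α) → Fin (l + 1) ×ₗ ι ×ₗ Bool → κ × α := pairQuery l w x
  let target (σ : κ → Perm α) (t : Fin (l + 1) ×ₗ ι ×ₗ Bool) : Finset α :=
    let (j, s) := ofLex t
    let (i, b) := ofLex s
    if b then {answer query σ (toLex (j, toLex (i, false)))} else ∅
  have target_predictable : IsPredictable query target := by
    rintro ⟨j, i, _ | _⟩ σ σ' h
    · rfl
    · refine congrArg singleton (h _ ?_).2
      exact Prod.Lex.right _ (Prod.Lex.right _ Bool.false_lt_true)
  let I : Finset (Fin (l + 1) ×ₗ ι ×ₗ Bool) :=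
    univ.map ⟨fun i ↦ toLex (Fin.last l, toLex (i, true)), fun i i' h ↦ by simpa using h⟩
  have bound := prob_forall_isFresh_and_answer_mem_mul_le (m := 1) (isPredictable_pairQuery l w x)
    target_predictable I fun σ t _ ↦ by dsimp only [target]; split_ifs <;> simp
  rw [card_map, card_univ, card_pairTime, Nat.cast_sub hT.le, Nat.cast_one, one_pow] at bound
  have hpos : (0 : ℝ) < Fintype.card α - ((l + 1) * (Fintype.card ι * 2) : ℕ) :=
    sub_pos.2 (mod_cast hT)
  rw [le_div_iff₀ (pow_pos hpos _)]
  refine le_trans ?_ bound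
  gcongr
  refine prob_mono fun σ hσ ↦ ?_
  simp only [I, forall_mem_map, mem_univ, true_imp_iff]
  exact fun i ↦ ⟨(hσ i).1, mem_singleton.2 (hσ i).2⟩

theorem prob_walk_eq_walk_le (h0 : w true 0 ≠ w false 0) (hl : w true l ≠ w false l) (x : ι ↪ α)
    (hT : (l + 1) * (Fintype.card ι * 2) < Fintype.card α) :
    prob (fun σ : κ → Perm α ↦
        ∀ i, walk σ (w true) (l + 1) (x i) = walk σ (w false) (l + 1) (x i)) ≤
      collisionBound (Fintype.card α) ((l + 1) * (Fintype.card ι * 2)) (Fintype.card ι) := by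
  classical
  have many_coincidences := prob_le_card_coincidences_mul_le (isPredictable_pairQuery l w x)
    (univ.map x) (Fintype.card ι + 1)
  have hpos : (0 : ℝ) < Fintype.card α - ((l + 1) * (Fintype.card ι * 2) : ℕ) :=
    sub_pos.2 (mod_cast hT)
  rw [card_map, card_univ, card_pairTime, Nat.cast_sub hT.le, ← le_div_iff₀ (by positivity),
    Nat.cast_mul, Nat.cast_add, ← div_pow] at many_coincidences
  refine le_trans (prob_mono fun σ hcol ↦ ?_) ((prob_or_le _ _).trans
    (add_le_add (prob_isFresh_and_meet_le (w := w) x hT) many_coincidences))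
  refine or_iff_not_imp_right.2 fun hfew i ↦ ⟨fun s hs heq ↦ ?_, hcol i⟩
  exact hs.ne (injective_pairQuery h0 hl hcol (by lia) heq)

end CollisionProbability

end Collision

section PermutationWords

variable {κ α ι : Type*}

theorem walk_congr {σ : κ → Perm α} {u v : ℕ → κ} {k : ℕ} (h : ∀ j < k, u j = v j) :
    walk σ u k = walk σ v k := by
  induction k with
  | zero => rfl
  | succ k ih => rw [walk, walk, h k k.lt_succ_self, ih fun j hj ↦ h j (hj.trans k.lt_succ_self)]

theorem walk_add (σ : κ → Perm α) (u : ℕ → κ) (k l : ℕ) :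
    walk σ u (k + l) = walk σ (fun j ↦ u (k + j)) l * walk σ u k := by
  induction l with
  | zero => simp [walk]
  | succ l ih => rw [← add_assoc, walk, ih, walk, mul_assoc]

theorem exists_first_and_last_difference {u v : ℕ → κ} {k j : ℕ} (hj : j < k) (huv : u j ≠ v j) :
    ∃ s l r, k = s + (l + 1 + r) ∧ u s ≠ v s ∧ u (s + l) ≠ v (s + l) ∧
      (∀ j < s, u j = v j) ∧ ∀ j < r, u (s + (l + 1 + j)) = v (s + (l + 1 + j)) := by
  classical
  set D : Finset ℕ := {j ∈ range k | u j ≠ v j}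
  have mem_D {j : ℕ} : j ∈ D ↔ j < k ∧ u j ≠ v j := by simp [D]
  have hD : D.Nonempty := ⟨j, mem_D.2 ⟨hj, huv⟩⟩
  obtain ⟨hs, hus⟩ := mem_D.1 (D.min'_mem hD)
  obtain ⟨he, hue⟩ := mem_D.1 (D.max'_mem hD)
  obtain ⟨l, hl⟩ := Nat.exists_eq_add_of_le (D.min'_le_max' hD)
  obtain ⟨r, hr⟩ := Nat.exists_eq_add_of_lt he
  refine ⟨D.min' hD, l, r, by lia, hus, hl ▸ hue, fun j hj ↦ ?_, fun j hj ↦ ?_⟩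
  · by_contra h
    exact (D.min'_le j (mem_D.2 ⟨hj.trans hs, h⟩)).not_gt hj
  · by_contra h
    have := D.le_max' _ (mem_D.2 ⟨by lia, h⟩)
    lia

variable [Fintype α] [DecidableEq α] [Fintype ι]

theorem card_conj_smul_eq (A P g h : Perm α) :
    #{x : ι ↪ α | (A * (g * P)) • x = (A * (h * P)) • x} = #{x : ι ↪ α | g • x = h • x} := by
  refine card_equiv (MulAction.toPerm P) fun x ↦ ?_
  simp [mul_smul]

variable [Fintype κ] [DecidableEq κ] [LinearOrder ι]

theorem expect_card_walk_smul_eq_le {u v : ℕ → κ} {k j : ℕ} (hj : j < k) (huv : u j ≠ v j)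
    (hT : k * (Fintype.card ι * 2) < Fintype.card α) :
    𝔼 σ : κ → Perm α, (#{x : ι ↪ α | walk σ u k • x = walk σ v k • x} : ℝ) ≤
      Fintype.card (ι ↪ α) *
        collisionBound (Fintype.card α) (k * (Fintype.card ι * 2)) (Fintype.card ι) := by
  obtain ⟨s, l, r, rfl, hs, hl, hpre, hsuf⟩ := exists_first_and_last_difference hj huv
  let w (b : Bool) (j : ℕ) : κ := if b then u (s + j) else v (s + j)
  have hlk : (l + 1) * (Fintype.card ι * 2) ≤ (s + (l + 1 + r)) * (Fintype.card ι * 2) :=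
    Nat.mul_le_mul_right _ (by lia)
  have split (σ : κ → Perm α) (v : ℕ → κ) : walk σ v (s + (l + 1 + r)) =
      walk σ (fun j ↦ v (s + (l + 1 + j))) r *
        (walk σ (fun j ↦ v (s + j)) (l + 1) * walk σ v s) := by
    rw [walk_add, walk_add, mul_assoc]
  have strip (σ : κ → Perm α) :
      #{x : ι ↪ α | walk σ u (s + (l + 1 + r)) • x = walk σ v (s + (l + 1 + r)) • x} =
        #{x : ι ↪ α | ∀ i, walk σ (w true) (l + 1) (x i) = walk σ (w false) (l + 1) (x i)} := by
    rw [split, split, ← walk_congr hpre, ← walk_congr hsuf, card_conj_smul_eq]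
    simp only [DFunLike.ext_iff]
    rfl
  simp only [strip]
  rw [expect_card_filter, ← nsmul_eq_mul, ← card_univ]
  refine sum_le_card_nsmul _ _ _ fun x _ ↦ ?_
  exact (prob_walk_eq_walk_le (w := w) hs hl x (hlk.trans_lt hT)).trans
    (collisionBound_mono hlk hT)

/-- The permutation by which the word `u`, of length `k`, acts. -/
noncomputable def wordPerm [Inhabited κ] {k : ℕ} (σ : κ → Perm α) (u : Fin k → κ) : Perm α :=
  walk σ (extend Fin.val u fun _ ↦ default) k

theorem expect_card_wordPerm_smul_eq_le [Inhabited κ] {k : ℕ} {u v : Fin k → κ} (huv : u ≠ v)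
    (hT : k * (Fintype.card ι * 2) < Fintype.card α) :
    𝔼 σ : κ → Perm α, (#{x : ι ↪ α | wordPerm σ u • x = wordPerm σ v • x} : ℝ) ≤
      Fintype.card (ι ↪ α) *
        collisionBound (Fintype.card α) (k * (Fintype.card ι * 2)) (Fintype.card ι) := by
  obtain ⟨j, hj⟩ := Function.ne_iff.1 huv
  exact expect_card_walk_smul_eq_le j.2 (by simpa only [Fin.val_injective.extend_apply]) hT

end PermutationWords

/-! ### Mixing of random walks on group actions -/

section Mixing

open scoped Matrix.Norms.Frobenius

variable {U G X : Type*} [Fintype X] [DecidableEq X]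

/-- The matrix all of whose entries are `1 / |X|`, the limit of an irreducible doubly stochastic
chain on `X`. -/
noncomputable def uniformMatrix (X : Type*) [Fintype X] : Matrix X X ℝ :=
  Matrix.of fun _ _ ↦ (Fintype.card X : ℝ)⁻¹

variable {M : Matrix X X ℝ}

theorem mul_uniformMatrix (hM : M ∈ doublyStochastic ℝ X) :
    M * uniformMatrix X = uniformMatrix X := by
  ext x y
  simp [uniformMatrix, Matrix.mul_apply, ← sum_mul, sum_row_of_mem_doublyStochastic hM]

theorem uniformMatrix_mul (hM : M ∈ doublyStochastic ℝ X) :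
    uniformMatrix X * M = uniformMatrix X := by
  ext x y
  simp [uniformMatrix, Matrix.mul_apply, ← mul_sum, sum_col_of_mem_doublyStochastic hM]

theorem uniformMatrix_mem_doublyStochastic [Nonempty X] :
    uniformMatrix X ∈ doublyStochastic ℝ X := by
  simp [mem_doublyStochastic_iff_sum, uniformMatrix]

theorem sub_uniformMatrix_pow_succ [Nonempty X] (hM : M ∈ doublyStochastic ℝ X) (j : ℕ) :
    (M - uniformMatrix X) ^ (j + 1) = M ^ (j + 1) - uniformMatrix X := by
  induction j with
  | zero => simp
  | succ j ih =>
    rw [pow_succ, ih, sub_mul, mul_sub, mul_sub, mul_uniformMatrix (pow_mem hM _),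
      uniformMatrix_mul hM, mul_uniformMatrix uniformMatrix_mem_doublyStochastic, sub_self,
      sub_zero, ← pow_succ]

theorem frobenius_norm_sq (A : Matrix X X ℝ) : ‖A‖ ^ 2 = ∑ x, ∑ y, A x y ^ 2 := by
  rw [Matrix.frobenius_norm_def, ← Real.sqrt_eq_rpow, Real.sq_sqrt (by positivity)]
  simp

theorem frobenius_norm_sub_uniformMatrix_sq [Nonempty X] (hM : M ∈ doublyStochastic ℝ X) :
    ‖M - uniformMatrix X‖ ^ 2 = ‖M‖ ^ 2 - 1 := by
  have row (x : X) : ∑ y, (M - uniformMatrix X) x y ^ 2 =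
      ∑ y, M x y ^ 2 - (Fintype.card X : ℝ)⁻¹ := by
    simp only [uniformMatrix, Matrix.sub_apply, Matrix.of_apply, sub_sq, sum_add_distrib,
      sum_sub_distrib, ← sum_mul, ← mul_sum, sum_row_of_mem_doublyStochastic hM, sum_const,
      card_univ, nsmul_eq_mul]
    field_simp
    ring
  simp only [frobenius_norm_sq, row, sum_sub_distrib]
  simp

theorem abs_apply_le_frobenius_norm (A : Matrix X X ℝ) (x y : X) : |A x y| ≤ ‖A‖ := by
  rw [← sq_le_sq₀ (abs_nonneg _) (norm_nonneg _), sq_abs, frobenius_norm_sq]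
  exact (single_le_sum (f := fun y ↦ A x y ^ 2) (fun _ _ ↦ sq_nonneg _) (mem_univ y)).trans
    (single_le_sum (f := fun x ↦ ∑ y, A x y ^ 2) (fun _ _ ↦ by positivity) (mem_univ x))

theorem pow_apply_ne_zero_of_norm_lt [Nonempty X] (hM : M ∈ doublyStochastic ℝ X) {j : ℕ}
    (h : ‖M - uniformMatrix X‖ ^ (j + 1) < (Fintype.card X : ℝ)⁻¹) (x y : X) :
    (M ^ (j + 1)) x y ≠ 0 := by
  intro h0
  refine h.not_ge ?_
  calc (Fintype.card X : ℝ)⁻¹ = |((M - uniformMatrix X) ^ (j + 1)) x y| := by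
        rw [sub_uniformMatrix_pow_succ hM, Matrix.sub_apply, h0]
        simp [uniformMatrix]
    _ ≤ ‖(M - uniformMatrix X) ^ (j + 1)‖ := abs_apply_le_frobenius_norm _ _ _
    _ ≤ _ := norm_pow_le' _ j.succ_pos

variable [Group G] [MulAction G X]

/-- The transition matrix of the random walk on `X` in which each step acts by `g u`, for a
uniformly random `u`. -/
noncomputable def transitionMatrix (X : Type*) [MulAction G X] (g : U → G) : Matrix X X ℝ :=
  Matrix.of fun x y ↦ prob fun u ↦ g u • x = y

theorem transitionMatrix_mem_doublyStochastic [Finite U] [Nonempty U] (g : U → G) :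
    transitionMatrix X g ∈ doublyStochastic ℝ X := by
  cases nonempty_fintype U
  simp only [mem_doublyStochastic_iff_sum, transitionMatrix, Matrix.of_apply]
  refine ⟨fun x y ↦ prob_nonneg _, fun x ↦ ?_, fun y ↦ ?_⟩
  · simp [← expect_card_filter, filter_eq]
  · simp [← expect_card_filter, ← eq_inv_smul_iff, filter_eq']

theorem frobenius_norm_transitionMatrix_sq [Fintype U] (g : U → G) :
    ‖transitionMatrix X g‖ ^ 2 = 𝔼 u, 𝔼 v, (#{x : X | g u • x = g v • x} : ℝ) := by
  have entry (x y : X) : transitionMatrix X g x y ^ 2 =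
      𝔼 u, 𝔼 v, if g u • x = y then if g v • x = y then (1 : ℝ) else 0 else 0 := by
    rw [transitionMatrix, Matrix.of_apply, prob_eq_expect, sq, expect_mul_expect, expect_comm]
    simp
  simp only [frobenius_norm_sq, entry, ← expect_sum_comm, sum_ite_eq, mem_univ, if_true, sum_boole]
  simp only [eq_comm]

theorem exists_list_of_transitionMatrix_pow_ne_zero [Finite U] {g : U → G} {j : ℕ} {x y : X}
    (h : (transitionMatrix X g ^ j) x y ≠ 0) :
    ∃ us : List U, us.length = j ∧ (us.map g).prod • x = y := by
  cases nonempty_fintype U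
  induction j generalizing x y with
  | zero =>
    refine ⟨[], rfl, ?_⟩
    simpa [Matrix.one_apply] using h
  | succ j ih =>
    rw [pow_succ, Matrix.mul_apply] at h
    obtain ⟨z, -, hz⟩ := exists_ne_zero_of_sum_ne_zero h
    obtain ⟨us, rfl, rfl⟩ := ih (left_ne_zero_of_mul hz)
    have step := right_ne_zero_of_mul hz
    rw [transitionMatrix, Matrix.of_apply, prob_eq_expect] at step
    obtain ⟨u, -, hu⟩ := exists_ne_zero_of_expect_ne_zero step
    refine ⟨u :: us, rfl, ?_⟩
    simpa [mul_smul] using hu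

end Mixing

section Transitivity

open scoped Matrix.Norms.Frobenius

variable {κ α ι : Type*}

theorem walk_mem_wordMaps (σ : κ → Perm α) (u : ℕ → κ) (k : ℕ) :
    ⇑(walk σ u k) ∈ wordMaps (Set.range fun c ↦ ⇑(σ c)) k := by
  induction k with
  | zero => exact id_mem_wordMaps
  | succ k ih =>
    rw [walk, Perm.coe_mul, add_comm]
    exact comp_mem_wordMaps ih (mem_wordMaps_one ⟨u k, rfl⟩)

variable [Inhabited κ] [Fintype α] [Fintype ι]

theorem exists_wordMap_of_norm_lt [Finite κ] [DecidableEq α] [Nonempty (ι ↪ α)]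
    {σ : κ → Perm α} {k j : ℕ}
    (h : ‖transitionMatrix (ι ↪ α) (wordPerm σ (k := k)) - uniformMatrix (ι ↪ α)‖ ^ (j + 1) <
      (Fintype.card (ι ↪ α) : ℝ)⁻¹) (x y : ι ↪ α) :
    ∃ f ∈ wordMaps (Set.range fun c ↦ ⇑(σ c)) ((j + 1) * k), ∀ i, f (x i) = y i := by
  obtain ⟨us, hlen, rfl⟩ := exists_list_of_transitionMatrix_pow_ne_zero
    (pow_apply_ne_zero_of_norm_lt (transitionMatrix_mem_doublyStochastic _) h x y)
  refine ⟨(us.map (wordPerm σ)).prod, ?_, fun i ↦ rfl⟩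
  rw [← hlen, ← List.length_map (wordPerm σ)]
  refine list_prod_mem_wordMaps fun π hπ ↦ ?_
  obtain ⟨u, -, rfl⟩ := List.mem_map.1 hπ
  exact walk_mem_wordMaps _ _ _

variable [Fintype κ] [LinearOrder ι]

theorem expect_norm_sub_uniformMatrix_sq_le [DecidableEq κ] [DecidableEq α] [Nonempty (ι ↪ α)]
    {k : ℕ}
    (hT : k * (Fintype.card ι * 2) < Fintype.card α) :
    𝔼 σ : κ → Perm α,
        ‖transitionMatrix (ι ↪ α) (wordPerm σ (k := k)) - uniformMatrix (ι ↪ α)‖ ^ 2 ≤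
      Fintype.card (ι ↪ α) / Fintype.card κ ^ k + Fintype.card (ι ↪ α) *
        collisionBound (Fintype.card α) (k * (Fintype.card ι * 2)) (Fintype.card ι) - 1 := by
  set N : ℝ := (Fintype.card (ι ↪ α) : ℝ)
  set p := collisionBound (Fintype.card α) (k * (Fintype.card ι * 2)) (Fintype.card ι)
  have hp : 0 ≤ p := collisionBound_nonneg hT.le
  have pair_bound (u v : Fin k → κ) :
      𝔼 σ : κ → Perm α, (#{x : ι ↪ α | wordPerm σ u • x = wordPerm σ v • x} : ℝ) ≤
        (if u = v then N else 0) + N * p := by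
    split_ifs with huv
    · have card_le (σ : κ → Perm α) :
          (#{x : ι ↪ α | wordPerm σ u • x = wordPerm σ v • x} : ℝ) ≤ N :=
        Nat.cast_le.2 (card_le_univ _)
      exact (expect_le univ_nonempty fun σ _ ↦ card_le σ).trans
        (le_add_of_nonneg_right (by positivity))
    · rw [zero_add]
      exact expect_card_wordPerm_smul_eq_le huv hT
  calc _ = 𝔼 u : Fin k → κ, 𝔼 v : Fin k → κ, 𝔼 σ : κ → Perm α,
        (#{x : ι ↪ α | wordPerm σ u • x = wordPerm σ v • x} : ℝ) - 1 := by
        simp only [frobenius_norm_sub_uniformMatrix_sq (transitionMatrix_mem_doublyStochastic _),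
          frobenius_norm_transitionMatrix_sq, expect_sub_distrib, Fintype.expect_const]
        rw [expect_comm]
        simp only [expect_comm (s := (univ : Finset (κ → Perm α)))]
    _ ≤ 𝔼 u : Fin k → κ, 𝔼 v : Fin k → κ, ((if u = v then N else 0) + N * p) - 1 := by
        gcongr with u _ v _
        exact pair_bound u v
    _ = _ := by
        simp [expect_add_distrib, NNRat.smul_def, div_eq_inv_mul]

theorem prob_not_transitive_mul_le [Nonempty (ι ↪ α)] {j k : ℕ} {ε : ℝ}
    (hε0 : 0 ≤ ε) (hT : k * (Fintype.card ι * 2) < Fintype.card α)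
    (hε : ε ^ (j + 1) < ((Fintype.card (ι ↪ α) : ℝ)⁻¹) ^ 2) :
    ε * prob (fun σ : κ → Perm α ↦ ¬ ∀ x y : ι ↪ α,
        ∃ f ∈ wordMaps (Set.range fun c ↦ ⇑(σ c)) ((j + 1) * k), ∀ i, f (x i) = y i) ≤
      Fintype.card (ι ↪ α) / Fintype.card κ ^ k + Fintype.card (ι ↪ α) *
        collisionBound (Fintype.card α) (k * (Fintype.card ι * 2)) (Fintype.card ι) - 1 := by
  classical
  refine le_trans ?_ (expect_norm_sub_uniformMatrix_sq_le hT)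
  refine le_trans ?_ (mul_prob_lt_le_expect (fun σ ↦ sq_nonneg _) ε)
  refine mul_le_mul_of_nonneg_left (prob_mono fun σ hσ ↦ ?_) hε0
  contrapose! hσ
  refine exists_wordMap_of_norm_lt (lt_of_pow_lt_pow_left₀ 2 (by positivity) ?_)
  rw [pow_right_comm]
  exact (pow_le_pow_left₀ (sq_nonneg _) hσ _).trans_lt hε

end Transitivity

/-! ### Iterates of a random map -/

section RandomMap

variable {α : Type*}

/-- The points `x, a x, …, a^[j] x` are distinct. -/
def DistinctUpTo (x : α) (j : ℕ) (a : α → α) : Prop :=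
  Set.InjOn (fun i ↦ a^[i] x) (Set.Iic j)

theorem DistinctUpTo.iterate_update_eq [DecidableEq α] {x : α} {j : ℕ} {a : α → α}
    (ha : DistinctUpTo x j a) (y : α) {i : ℕ} (hi : i ≤ j) :
    (update a (a^[j] x) y)^[i] x = a^[i] x := by
  induction i with
  | zero => rfl
  | succ i ih =>
    have hne : a^[i] x ≠ a^[j] x := fun h ↦
      Nat.ne_of_lt hi (ha (Set.mem_Iic.2 (by lia)) (Set.mem_Iic.2 le_rfl) h)
    rw [iterate_succ_apply', iterate_succ_apply', ih (by lia), update_of_ne hne]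

theorem DistinctUpTo.card_image_iterate [DecidableEq α] {x : α} {j : ℕ} {a : α → α}
    (ha : DistinctUpTo x j a) : #(image (fun i ↦ a^[i] x) (Iic j)) = j + 1 := by
  rw [card_image_of_injOn (by rwa [coe_Iic]), Nat.card_Iic]

theorem DistinctUpTo.of_le {x : α} {i j : ℕ} {a : α → α} (ha : DistinctUpTo x j a) (hij : i ≤ j) :
    DistinctUpTo x i a :=
  ha.mono (Set.Iic_subset_Iic.2 hij)

theorem iterate_mem_periodicPts_of_not_distinctUpTo {x : α} {t : ℕ} {a : α → α}
    (h : ¬ DistinctUpTo x t a) : a^[t] x ∈ periodicPts a := by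
  obtain ⟨i, j, hij, hj, heq⟩ : ∃ i j, i < j ∧ j ≤ t ∧ a^[i] x = a^[j] x := by
    simp only [DistinctUpTo, Set.InjOn, Set.mem_Iic, not_forall] at h
    obtain ⟨i, hi, j, hj, heq, hne⟩ := h
    obtain hlt | hlt := lt_or_gt_of_ne hne
    exacts [⟨i, j, hlt, hj, heq⟩, ⟨j, i, hlt, hi, heq.symm⟩]
  have periodic : IsPeriodicPt a (j - i) (a^[i] x) := by
    rw [IsPeriodicPt, IsFixedPt, ← iterate_add_apply, Nat.sub_add_cancel hij.le, heq]
  refine ⟨j - i, by lia, ?_⟩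
  have := periodic.apply_iterate (t - i)
  rwa [← iterate_add_apply, Nat.sub_add_cancel (hij.le.trans hj)] at this

theorem sum_range_le_two_mul {p : ℕ → ℝ} {r : ℝ} (hr : 0 < r) (h0 : ∀ j, 0 ≤ p j)
    (h1 : ∀ j, p j ≤ 1) (hp : ∀ j : ℕ, (j + 1) * p j ≤ r ^ 2 * (p j - p (j + 1))) (t : ℕ) :
    ∑ j ∈ range t, p j ≤ 2 * r := by
  suffices ∑ j ∈ range t, p j ≤ r + r * (1 - p t) by nlinarith [h0 t]
  induction t with
  | zero => simpa using by nlinarith [h1 0]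
  | succ t ih =>
    obtain ht | ht := le_or_gt (t + 1 : ℝ) r
    · have : ∑ j ∈ range (t + 1), p j ≤ t + 1 := by
        simpa using sum_le_sum fun j (_ : j ∈ range (t + 1)) ↦ h1 j
      nlinarith [h1 (t + 1)]
    · have : p t ≤ r * (p t - p (t + 1)) := by
        refine le_of_mul_le_mul_left ?_ hr
        calc r * p t ≤ (t + 1) * p t := by grw [ht]; exact h0 t
          _ ≤ r * (r * (p t - p (t + 1))) := by linarith [hp t]
      rw [sum_range_succ]
      linarith

variable [Fintype α]

theorem exists_distinctUpTo_of_mem_periodicPts {a : α → α} {x : α} (hx : x ∈ periodicPts a) :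
    ∃ j ∈ range (Fintype.card α), DistinctUpTo x j a ∧ a^[j + 1] x = x := by
  classical
  have hpos := minimalPeriod_pos_of_mem_periodicPts hx
  obtain ⟨j, hj⟩ := Nat.exists_eq_succ_of_ne_zero hpos.ne'
  have distinct : DistinctUpTo x j a := iterate_injOn_Iio_minimalPeriod.mono fun i hi ↦ by
    simp only [Set.mem_Iic, Set.mem_Iio] at hi ⊢
    lia
  refine ⟨j, mem_range.2 ?_, distinct, ?_⟩
  · rw [← Nat.add_one_le_iff, ← distinct.card_image_iterate]
    exact card_le_univ _
  · rw [← Nat.succ_eq_add_one, ← hj]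
    exact iterate_minimalPeriod

variable (x : α) (j : ℕ)

theorem prob_distinctUpTo_and_mem_mul_le {A : (α → α) → Finset α} {m : ℕ}
    (hA : ∀ a a' : α → α, (∀ i ≤ j, a^[i] x = a'^[i] x) → A a = A a')
    (hm : ∀ a, DistinctUpTo x j a → #(A a) ≤ m) :
    prob (fun a ↦ DistinctUpTo x j a ∧ a^[j + 1] x ∈ A a) * Fintype.card α ≤
      m * prob (DistinctUpTo x j) := by
  classical
  refine prob_mul_le_of_resample (fun a y ↦ update a (a^[j] x) y) (fun a ↦ a^[j + 1] x)
    (fun _ ↦ univ) A (fun _ _ ↦ le_rfl) hm (fun a h y _ ↦ ?_) (fun a h y _ ↦ ?_)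
  · have orbit {i : ℕ} (hi : i ≤ j) := h.1.iterate_update_eq y hi
    refine ⟨h.1.congr fun i hi ↦ (orbit hi).symm, ?_⟩
    rw [hA _ a fun i hi ↦ orbit hi]
    exact h.2
  · have orbit := h.1.iterate_update_eq y le_rfl
    refine ⟨?_, ?_⟩
    · rw [iterate_succ_apply', orbit, update_self]
    · simp only [orbit, update_idem]
      rw [iterate_succ_apply', update_eq_self]

theorem prob_distinctUpTo_and_return_mul_le :
    prob (fun a ↦ DistinctUpTo x j a ∧ a^[j + 1] x = x) * Fintype.card α ≤
      prob (DistinctUpTo x j) := by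
  simpa using prob_distinctUpTo_and_mem_mul_le x j (A := fun _ ↦ {x}) (m := 1)
    (fun _ _ _ ↦ rfl) fun _ _ ↦ le_rfl

theorem prob_distinctUpTo_succ_mul_le :
    prob (DistinctUpTo x (j + 1)) * Fintype.card α ≤
      (Fintype.card α - (j + 1)) * prob (DistinctUpTo x j) := by
  classical
  have card_compl_orbit (a : α → α) (ha : DistinctUpTo x j a) :
      #(image (fun i ↦ a^[i] x) (Iic j))ᶜ ≤ Fintype.card α - (j + 1) := by
    rw [card_compl, ha.card_image_iterate]
  have orbit_determined (a a' : α → α) (h : ∀ i ≤ j, a^[i] x = a'^[i] x) :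
      (image (fun i ↦ a^[i] x) (Iic j))ᶜ = (image (fun i ↦ a'^[i] x) (Iic j))ᶜ :=
    congrArg _ (image_congr fun i hi ↦ h i (by simpa using hi))
  have escape (a : α → α) (ha : DistinctUpTo x (j + 1) a) :
      DistinctUpTo x j a ∧ a^[j + 1] x ∈ (image (fun i ↦ a^[i] x) (Iic j))ᶜ := by
    refine ⟨ha.of_le j.le_succ, ?_⟩
    simp only [mem_compl, mem_image, mem_Iic, not_exists, not_and]
    intro i hi h
    have := ha (Set.mem_Iic.2 (by lia)) (Set.mem_Iic.2 le_rfl) h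
    lia
  have bound := prob_distinctUpTo_and_mem_mul_le x j orbit_determined card_compl_orbit
  grw [prob_mono escape, bound]
  obtain hj | hj := le_or_gt (j + 1) (Fintype.card α)
  · rw [Nat.cast_sub hj, Nat.cast_succ]
  · have : prob (DistinctUpTo x j) ≤ prob (fun _ : α → α ↦ False) := prob_mono fun a ha ↦
      hj.not_ge (ha.card_image_iterate ▸ card_le_univ _)
    have : prob (DistinctUpTo x j) = 0 := le_antisymm (by simpa [prob] using this) (prob_nonneg _)
    simp [this]

theorem prob_distinctUpTo_le :
    prob (DistinctUpTo x j) ≤ Real.exp (-(j * (j + 1) / (2 * Fintype.card α))) := by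
  have hn : (0 : ℝ) < Fintype.card α := Nat.cast_pos.2 (Fintype.card_pos_iff.2 ⟨x⟩)
  induction j with
  | zero => simpa using prob_le_one _
  | succ j ih =>
    calc prob (DistinctUpTo x (j + 1))
        ≤ (1 - (j + 1) / Fintype.card α) * prob (DistinctUpTo x j) := by
          rw [← mul_le_mul_iff_left₀ hn]
          refine (prob_distinctUpTo_succ_mul_le x j).trans_eq ?_
          field_simp
      _ ≤ Real.exp (-((j + 1) / Fintype.card α)) *
            Real.exp (-(j * (j + 1) / (2 * Fintype.card α))) := by
          gcongr
          · exact prob_nonneg _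
          · exact Real.one_sub_le_exp_neg _
      _ = _ := by
          rw [← Real.exp_add]
          push_cast
          congr 1
          field_simp
          ring

theorem sum_prob_distinctUpTo_and_return_le (t : ℕ) :
    ∑ j ∈ range t, prob (fun a ↦ DistinctUpTo x j a ∧ a^[j + 1] x = x) ≤
      2 * √(Fintype.card α) / Fintype.card α := by
  have hn : (0 : ℝ) < Fintype.card α := Nat.cast_pos.2 (Fintype.card_pos_iff.2 ⟨x⟩)
  rw [le_div_iff₀ hn, sum_mul]
  refine (sum_le_sum fun j _ ↦ prob_distinctUpTo_and_return_mul_le x j).trans ?_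
  refine sum_range_le_two_mul (Real.sqrt_pos.2 hn) (fun j ↦ prob_nonneg _)
    (fun j ↦ prob_le_one _) (fun j ↦ ?_) t
  rw [Real.sq_sqrt hn.le]
  linarith [prob_distinctUpTo_succ_mul_le x j]

theorem expect_ncard_periodicPts_le (α : Type*) [Fintype α] [DecidableEq α] :
    𝔼 a : α → α, ((periodicPts a).ncard : ℝ) ≤ 2 * √(Fintype.card α) := by
  classical
  calc 𝔼 a : α → α, ((periodicPts a).ncard : ℝ)
      = ∑ x, prob (fun a : α → α ↦ x ∈ periodicPts a) := by
        rw [← expect_card_filter]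
        simp only [Set.ncard_eq_toFinset_card', Set.toFinset_card, Fintype.card_subtype]
    _ ≤ ∑ _x : α, 2 * √(Fintype.card α) / Fintype.card α := sum_le_sum fun x _ ↦ by
        grw [prob_mono fun a ↦ exists_distinctUpTo_of_mem_periodicPts, prob_exists_le]
        exact sum_prob_distinctUpTo_and_return_le x _
    _ ≤ 2 * √(Fintype.card α) := by
        rw [sum_const, card_univ, nsmul_eq_mul, mul_div_left_comm]
        exact mul_le_of_le_one_right (by positivity) (div_self_le_one _)

theorem prob_lt_card_image_iterate_le [DecidableEq α] {r : ℝ} (hr : 0 < r) (t : ℕ) :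
    prob (fun a : α → α ↦ r < #(univ.image a^[t])) ≤
      Fintype.card α * Real.exp (-(t * (t + 1) / (2 * Fintype.card α))) +
        2 * √(Fintype.card α) / r := by
  have late_repetition : prob (fun a : α → α ↦ ∃ x ∈ univ, DistinctUpTo x t a) ≤
      Fintype.card α * Real.exp (-(t * (t + 1) / (2 * Fintype.card α))) := by
    refine (prob_exists_le _ _).trans ?_
    simpa using sum_le_sum fun (x : α) (_ : x ∈ univ) ↦ prob_distinctUpTo_le x t
  have many_periodic : prob (fun a : α → α ↦ r < (periodicPts a).ncard) ≤
      2 * √(Fintype.card α) / r := by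
    rw [le_div_iff₀' hr]
    exact (mul_prob_lt_le_expect (fun _ ↦ Nat.cast_nonneg _) r).trans
      (expect_ncard_periodicPts_le α)
  refine le_trans (prob_mono fun a ha ↦ ?_)
    ((prob_or_le _ _).trans (add_le_add late_repetition many_periodic))
  refine or_iff_not_imp_left.2 fun h ↦ ha.trans_le (Nat.cast_le.2 ?_)
  rw [← Set.ncard_coe_finset]
  refine Set.ncard_le_ncard (fun y hy ↦ ?_)
  obtain ⟨x, -, rfl⟩ := mem_image.1 hy
  exact iterate_mem_periodicPts_of_not_distinctUpTo fun hx ↦ h ⟨x, mem_univ x, hx⟩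

end RandomMap

/-! ### Random automata -/

section RandomAutomata

variable {n : ℕ}

theorem one_lt_cast_of_one_le_log (hlog : 1 ≤ Real.log n) : (1 : ℝ) < n :=
  (Real.log_pos_iff n.cast_nonneg).1 (zero_lt_one.trans_le hlog)

theorem prob_sqrt_mul_log_lt_card_image_iterate_le (hlog : 1 ≤ Real.log n) {t : ℕ}
    (ht : 2 * √(n * Real.log n) ≤ t) :
    prob (fun a : Fin n → Fin n ↦ √(n * Real.log n) < #(univ.image a^[t])) ≤
      1 / n + 2 / √(Real.log n) := by
  have hn : (0 : ℝ) < n := zero_lt_one.trans (one_lt_cast_of_one_le_log hlog)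
  have exponent_le : Real.log n + Real.log n ≤ t * (t + 1) / (2 * n) := by
    rw [le_div_iff₀ (by positivity)]
    nlinarith [Real.mul_self_sqrt (mul_nonneg hn.le (zero_le_one.trans hlog)),
      Real.sqrt_nonneg (n * Real.log n)]
  refine (prob_lt_card_image_iterate_le (by positivity) t).trans ?_
  rw [Fintype.card_fin]
  refine add_le_add ?_ (le_of_eq ?_)
  · calc n * Real.exp (-(t * (t + 1) / (2 * n)))
        ≤ n * Real.exp (-(Real.log n + Real.log n)) := by gcongr
      _ = 1 / n := by
        rw [Real.exp_neg, Real.exp_add, Real.exp_log hn]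
        field_simp
  · rw [Real.sqrt_mul hn.le, mul_comm 2, mul_div_mul_left _ _ (Real.sqrt_pos.2 hn).ne']

theorem clog_two_le_three_mul_log (hlog : 1 ≤ Real.log n) :
    (Nat.clog 2 n : ℝ) ≤ 3 * Real.log n := by
  have hn : 1 < n := mod_cast one_lt_cast_of_one_le_log hlog
  have hpow : (2 : ℝ) ^ (Nat.clog 2 n - 1) ≤ n :=
    mod_cast (Nat.pow_pred_clog_lt_self one_lt_two hn).le
  have hle := Real.log_le_log (by positivity) hpow
  rw [Real.log_pow, Nat.cast_pred (Nat.clog_pos one_lt_two hn)] at hle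
  have hclog : (1 : ℝ) ≤ Nat.clog 2 n := mod_cast Nat.clog_pos one_lt_two hn
  nlinarith [Real.log_two_gt_d9]

theorem mul_collisionBound_two_le {T : ℕ} {N : ℝ} (hn : 0 < n)
    (hT : 2 * T ≤ n) (hN : N ≤ n ^ 2) :
    N * collisionBound n T 2 ≤ 1 + 16 * (T + 4) ^ 6 / n := by
  have hn' : (0 : ℝ) < n := Nat.cast_pos.2 hn
  have hT' : (n : ℝ) / 2 ≤ n - T := by
    rify at hT
    linarith
  have hd : (0 : ℝ) < n - T := by linarith
  have no_coincidence : N * (1 / (n - T : ℝ) ^ 2) ≤ 1 + 8 * T / n := calc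
    _ ≤ (n : ℝ) ^ 2 * (1 / (n - T : ℝ) ^ 2) := by gcongr
    _ = 1 + (n ^ 2 - (n - T : ℝ) ^ 2) / (n - T : ℝ) ^ 2 := by
      field_simp
      ring
    _ ≤ 1 + 2 * n * T / (n / 2 : ℝ) ^ 2 := by
      gcongr
      nlinarith [sq_nonneg (T : ℝ)]
    _ = 1 + 8 * T / n := by
      field_simp
      ring
  have many_coincidences :
      N * ((T * (T + 2 : ℝ)) / (n - T)) ^ 3 ≤ 8 * (T + 4) ^ 6 / n := calc
    _ ≤ (n : ℝ) ^ 2 * (((T + 4) * (T + 4 : ℝ)) / (n / 2)) ^ 3 := by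
      gcongr <;> linarith
    _ = 8 * (T + 4) ^ 6 / n := by
      field_simp
      ring
  have linear_le : 8 * (T : ℝ) / n ≤ 8 * (T + 4) ^ 6 / n := by
    gcongr
    have one_le : (1 : ℝ) ≤ T + 4 := by linarith [T.cast_nonneg (α := ℝ)]
    exact (le_add_of_nonneg_right zero_le_four).trans (le_self_pow₀ one_le (by norm_num))
  rw [collisionBound, mul_add]
  norm_num at no_coincidence many_coincidences ⊢
  linear_combination no_coincidence + many_coincidences + linear_le

theorem div_add_mul_collisionBound_two_sub_one_le {T : ℕ} {N K : ℝ} (hn : 0 < n)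
    (hT : 2 * T ≤ n) (hN : N ≤ n ^ 2) (hK : n ^ 3 ≤ K) :
    N / K + N * collisionBound n T 2 - 1 ≤ 17 * (T + 4) ^ 6 / n := by
  have : (0 : ℝ) < n := Nat.cast_pos.2 hn
  have one_le : (1 : ℝ) ≤ (T + 4) ^ 6 := one_le_pow₀ (by linarith [T.cast_nonneg (α := ℝ)])
  calc N / K + N * collisionBound n T 2 - 1
      ≤ n ^ 2 / n ^ 3 + (1 + 16 * (T + 4) ^ 6 / n) - 1 := by
        gcongr
        exact mul_collisionBound_two_le hn hT hN
    _ = (1 + 16 * (T + 4) ^ 6) / n := by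
        field_simp
        ring
    _ ≤ 17 * (T + 4) ^ 6 / n := by
        gcongr
        linarith

theorem isTwoTransitiveWithin_of_embedding {Q : Type*} {L : Set (Q → Q)} {r : ℕ}
    (h : ∀ x y : Fin 2 ↪ Q, ∃ f ∈ wordMaps L r, ∀ i, f (x i) = y i) :
    IsTwoTransitiveWithin L r := fun _ _ _ _ hpq hpq' ↦ by
  obtain ⟨f, hf, hfxy⟩ := h (Embedding.embFinTwo hpq) (Embedding.embFinTwo hpq')
  exact ⟨f, hf, hfxy 0, hfxy 1⟩

theorem prob_not_isTwoTransitiveWithin_mul_le {α : Type*} [Fintype α] [Nontrivial α] {j k : ℕ}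
    {ε : ℝ} (hε0 : 0 ≤ ε) (hT : k * (2 * 2) < Fintype.card α)
    (hε : ε ^ (j + 1) < ((Fintype.card (Fin 2 ↪ α) : ℝ)⁻¹) ^ 2) :
    ε * prob (fun y : Perm α × Perm α ↦
        ¬ IsTwoTransitiveWithin {⇑y.1, ⇑y.2} ((j + 1) * k)) ≤
      Fintype.card (Fin 2 ↪ α) / 2 ^ k + Fintype.card (Fin 2 ↪ α) *
        collisionBound (Fintype.card α) (k * (2 * 2)) 2 - 1 := by
  obtain ⟨x, y, hxy⟩ := exists_pair_ne α
  have : Nonempty (Fin 2 ↪ α) := ⟨Embedding.embFinTwo hxy⟩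
  have h := prob_not_transitive_mul_le (ι := Fin 2) (κ := Bool) (α := α) (k := k) hε0
    (by simpa using hT) hε
  simp only [Fintype.card_fin, Fintype.card_bool, Nat.cast_ofNat, Bool.range_eq] at h
  refine le_trans (mul_le_mul_of_nonneg_left ?_ hε0) h
  rw [← prob_comp_equiv (boolArrowEquivProd (Perm α))]
  exact prob_mono fun σ ↦ mt isTwoTransitiveWithin_of_embedding

theorem card_embedding_fin_two_le_sq (n : ℕ) : Fintype.card (Fin 2 ↪ Fin n) ≤ n ^ 2 := by
  rw [Fintype.card_embedding_eq, Fintype.card_fin, Fintype.card_fin]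
  exact Nat.descFactorial_le_pow n 2

theorem inv_sqrt_pow_ten_lt (hn : 2 ≤ n) :
    (√n)⁻¹ ^ (9 + 1) < ((Fintype.card (Fin 2 ↪ Fin n) : ℝ)⁻¹) ^ 2 := by
  have hn' : (1 : ℝ) < n := by exact_mod_cast hn
  have card_pos : 0 < Fintype.card (Fin 2 ↪ Fin n) := by
    rw [Fintype.card_embedding_eq, Nat.descFactorial_pos]
    simpa using hn
  calc (√n)⁻¹ ^ (9 + 1) = ((n : ℝ) ^ 5)⁻¹ := by
        rw [inv_pow, show (√n) ^ (9 + 1) = ((√n) ^ 2) ^ 5 by ring, Real.sq_sqrt n.cast_nonneg]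
    _ < ((n : ℝ) ^ 4)⁻¹ := by
        gcongr
        lia
    _ = (((n : ℝ) ^ 2)⁻¹) ^ 2 := by
        rw [← inv_pow, ← inv_pow, ← pow_mul]
    _ ≤ _ := by
        gcongr
        exact_mod_cast card_embedding_fin_two_le_sq n

theorem prob_not_isTwoTransitiveWithin_le (hlog : 1 ≤ Real.log n) (hn : 72 * Real.log n < n) :
    prob (fun y : Perm (Fin n) × Perm (Fin n) ↦
        ¬ IsTwoTransitiveWithin {⇑y.1, ⇑y.2} (10 * (3 * Nat.clog 2 n))) ≤
      17 * (40 * Real.log n) ^ 6 / √n := by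
  have hn2 : 2 ≤ n := mod_cast one_lt_cast_of_one_le_log hlog
  have : Nontrivial (Fin n) := Fin.nontrivial_iff_two_le.2 hn2
  set k := 3 * Nat.clog 2 n with hk
  have hclog := clog_two_le_three_mul_log hlog
  have hT : ((k * (2 * 2) : ℕ) : ℝ) ≤ 36 * Real.log n := by
    rw [hk]
    push_cast
    linarith
  have hT' : 2 * (k * (2 * 2)) < n := by
    rify at hT ⊢
    linarith
  have hpow : n ^ 3 ≤ 2 ^ k := by
    rw [hk, mul_comm, pow_mul]
    gcongr
    exact Nat.le_pow_clog one_lt_two n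
  have h := prob_not_isTwoTransitiveWithin_mul_le (α := Fin n) (k := k)
    (inv_nonneg.2 (Real.sqrt_nonneg n)) (by rw [Fintype.card_fin]; lia) (inv_sqrt_pow_ten_lt hn2)
  rw [inv_mul_le_iff₀ (by positivity), Fintype.card_fin] at h
  calc _ ≤ √n * (17 * (↑(k * (2 * 2)) + 4) ^ 6 / n) := by
        grw [h, div_add_mul_collisionBound_two_sub_one_le (by lia) hT'.le
          (mod_cast card_embedding_fin_two_le_sq n) (mod_cast hpow)]
    _ = √n / n * (17 * (↑(k * (2 * 2)) + 4) ^ 6) := by ring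
    _ ≤ √n / n * (17 * (40 * Real.log n) ^ 6) := by
        gcongr
        linarith
    _ = 17 * (40 * Real.log n) ^ 6 / √n := by
        rw [Real.sqrt_div_self, inv_mul_eq_div]

theorem floor_mul_add_ceil_le (hlog : 1 ≤ Real.log n) :
    (⌊√(n * Real.log n)⌋₊ * (10 * (3 * Nat.clog 2 n) + 1) + ⌈2 * √(n * Real.log n)⌉₊ : ℝ) ≤
      100 * √(n * Real.log n ^ 3) := by
  have hn := one_lt_cast_of_one_le_log hlog
  have sqrt_eq : √(n * Real.log n ^ 3) = √(n * Real.log n) * Real.log n := by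
    rw [pow_succ', ← mul_assoc, Real.sqrt_mul (by positivity), Real.sqrt_sq (by positivity)]
  have one_le_sqrt : 1 ≤ √(n * Real.log n) :=
    Real.one_le_sqrt.2 (one_le_mul_of_one_le_of_one_le hn.le hlog)
  have sqrt_le := le_mul_of_one_le_right (Real.sqrt_nonneg (n * Real.log n)) hlog
  have hclog := clog_two_le_three_mul_log hlog
  calc _ ≤ √(n * Real.log n) * (10 * (3 * (3 * Real.log n)) + 1) +
        (2 * √(n * Real.log n) + 1) := by
        gcongr
        · exact Nat.floor_le (Real.sqrt_nonneg _)
        · exact (Nat.ceil_lt_add_one (by positivity)).le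
    _ ≤ 100 * √(n * Real.log n ^ 3) := by
        rw [sqrt_eq]
        linarith

theorem exists_isSyncWord_of_isTwoTransitiveWithin (hlog : 1 ≤ Real.log n) {a : Fin n → Fin n}
    {L : Set (Fin n → Fin n)} (ha : a ∈ L)
    (himage : #(univ.image a^[⌈2 * √(n * Real.log n)⌉₊]) ≤ √(n * Real.log n))
    (htrans : IsTwoTransitiveWithin L (10 * (3 * Nat.clog 2 n))) :
    ∃ w : List (Fin n → Fin n), (∀ f ∈ w, f ∈ L) ∧
      w.length ≤ 100 * √(n * Real.log n ^ 3) ∧ IsSyncWord w := by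
  have hn : (0 : ℝ) < n := zero_lt_one.trans (one_lt_cast_of_one_le_log hlog)
  have sqrt_lt : √(n * Real.log n) < n := by
    rw [Real.sqrt_lt' hn, sq]
    gcongr
    exact (Real.log_le_sub_one_of_pos hn).trans_lt (sub_one_lt _)
  have floor_lt : ⌊√(n * Real.log n)⌋₊ < Fintype.card (Fin n) := by
    rwa [Fintype.card_fin, Nat.floor_lt (Real.sqrt_nonneg _)]
  obtain ⟨w, hw, hlen, hsync⟩ := exists_isSyncWord ha (Nat.le_floor himage) floor_lt htrans
  refine ⟨w, hw, le_trans ?_ (floor_mul_add_ceil_le hlog), hsync⟩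
  exact_mod_cast hlen

/-- The automaton with letters `x.1`, `x.2.1`, `x.2.2` has a synchronizing word of length at most
`ℓ`. -/
def HasSyncWordWithin (ℓ : ℝ) (x : (Fin n → Fin n) × Perm (Fin n) × Perm (Fin n)) : Prop :=
  ∃ w : List (Fin n → Fin n), (∀ f ∈ w, f = x.1 ∨ f = ⇑x.2.1 ∨ f = ⇑x.2.2) ∧
    w.length ≤ ℓ ∧ IsSyncWord w

/-- Bound for the probability that the random automaton on `n` states has no synchronizing word
of length at most `100 * √(n * log n ^ 3)`. -/
noncomputable def failureBound (n : ℕ) : ℝ :=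
  1 / n + 2 / √(Real.log n) + 17 * (40 * Real.log n) ^ 6 / √n

theorem one_sub_failureBound_le_prob (hlog : 1 ≤ Real.log n) (hn : 72 * Real.log n < n) :
    1 - failureBound n ≤ prob (fun x : (Fin n → Fin n) × Perm (Fin n) × Perm (Fin n) ↦
      HasSyncWordWithin (100 * √(n * Real.log n ^ 3)) x) := by
  have : Nonempty (Fin n → Fin n) := ⟨id⟩
  have large_image := prob_sqrt_mul_log_lt_card_image_iterate_le hlog (Nat.le_ceil _)
  have not_transitive := prob_not_isTwoTransitiveWithin_le hlog hn
  rw [← prob_fst (Ω' := Perm (Fin n) × Perm (Fin n))] at large_image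
  rw [← prob_snd (Ω := Fin n → Fin n)] at not_transitive
  rw [sub_le_iff_le_add]
  refine (one_le_prob_add_prob_not _).trans (add_le_add_right ?_ _)
  refine (prob_mono fun x hx ↦ ?_).trans <|
    (prob_or_le _ _).trans (add_le_add large_image not_transitive)
  contrapose! hx
  exact exists_isSyncWord_of_isTwoTransitiveWithin (L := {x.1, ⇑x.2.1, ⇑x.2.2}) hlog
    (Set.mem_insert _ _) hx.1 (IsTwoTransitiveWithin.mono hx.2 (Set.subset_insert _ _))

theorem tendsto_failureBound : Filter.Tendsto failureBound Filter.atTop (nhds 0) := by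
  have hcast := tendsto_natCast_atTop_atTop (R := ℝ)
  have sqrt_log : Filter.Tendsto (fun n : ℕ ↦ 2 / √(Real.log n)) Filter.atTop (nhds 0) :=
    tendsto_const_nhds.div_atTop
      (Real.tendsto_sqrt_atTop.comp (Real.tendsto_log_atTop.comp hcast))
  have log_pow : Filter.Tendsto (fun n : ℕ ↦ 17 * (40 * Real.log n) ^ 6 / √n)
      Filter.atTop (nhds 0) := by
    have h := (isLittleO_log_rpow_rpow_atTop 6 one_half_pos).tendsto_div_nhds_zero
    have h' := (h.comp hcast).const_mul (17 * 40 ^ 6)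
    rw [mul_zero] at h'
    refine h'.congr fun n ↦ ?_
    simp only [comp_apply, Real.sqrt_eq_rpow]
    norm_cast
    ring
  unfold failureBound
  simpa using (tendsto_one_div_atTop_nhds_zero_nat.add sqrt_log).add log_pow

theorem eventually_one_le_log_and_mul_log_lt (c : ℝ) :
    ∀ᶠ n : ℕ in Filter.atTop, 1 ≤ Real.log n ∧ c * Real.log n < n := by
  have hcast := tendsto_natCast_atTop_atTop (R := ℝ)
  have mul_log_small := (Real.isLittleO_log_id_atTop.const_mul_left c).bound one_half_pos
  filter_upwards [(Real.tendsto_log_atTop.comp hcast).eventually_ge_atTop 1,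
    hcast.eventually mul_log_small, Filter.eventually_gt_atTop 0] with n hlog h hn
  refine ⟨hlog, (Real.le_norm_self _).trans_lt (h.trans_lt ?_)⟩
  rw [id, Real.norm_natCast]
  exact mul_lt_of_lt_one_left (Nat.cast_pos.2 hn) one_half_lt_one

end RandomAutomata

end RandomAutomaton

/-- There is a constant `C > 0` such that, for the automaton on `Fin n` whose three
letters act by a uniformly random mapping `a` and two independent uniformly random
permutations `b`, `c` (all mutually independent, i.e. the triple `(a, b, c)` is
uniform on the product space), the probability that the automaton is synchronizing
with a synchronizing word of length at most `C * √(n * (log n)^3)` tends to `1` as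
`n → ∞`. -/
theorem random_automaton_sqrt_reset_threshold :
    ∃ C : ℝ, 0 < C ∧
      Filter.Tendsto
        (fun n : ℕ =>
          (Nat.card {x : (Fin n → Fin n) × Equiv.Perm (Fin n) × Equiv.Perm (Fin n) //
              ∃ w : List (Fin n → Fin n),
                (∀ f ∈ w, f = x.1 ∨ f = ⇑x.2.1 ∨ f = ⇑x.2.2) ∧
                (w.length : ℝ) ≤ C * Real.sqrt (n * (Real.log n) ^ 3) ∧
                IsSyncWord w} : ℝ) /
          (Nat.card ((Fin n → Fin n) × Equiv.Perm (Fin n) × Equiv.Perm (Fin n)) : ℝ))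
        Filter.atTop (nhds 1) := by
  refine ⟨100, by norm_num, tendsto_of_tendsto_of_tendsto_of_le_of_le'
    (g := fun n ↦ 1 - RandomAutomaton.failureBound n) ?_ tendsto_const_nhds ?_
    (.of_forall fun n ↦ RandomAutomaton.prob_le_one _)⟩
  · simpa using RandomAutomaton.tendsto_failureBound.const_sub 1
  · filter_upwards [RandomAutomaton.eventually_one_le_log_and_mul_log_lt 72] with n ⟨hlog, hn⟩
    exact RandomAutomaton.one_sub_failureBound_le_prob hlog hn
end

section
/- For every r ≥ 1 and every d ≥ 2 there exists a constant C > 0 such that the following holds. For each n, let π₁, π₂, …, π_d be d independent uniformly random permutations of Fin n. Then the probability of the following event tends to 1 as n → ∞: for every pair of r-tuples (x₁, …, x_r) and (y₁, …, y_r) of elements of Fin n, each tuple having pairwise distinct entries, there exists a finite sequence of at most C · log n permutations, each taken from {π₁, …, π_d}, whose composition maps x_i to y_i for every i = 1, …, r. -/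
/-- The action of a word (a list of permutations) on a point, applying the
permutations in order: the first element of the list acts first. -/
def permWordAction {Q : Type*} (w : List (Equiv.Perm Q)) (q : Q) : Q :=
  w.foldl (fun s σ => σ s) q

/-!
Let `T` be the transition matrix, on `r`-tuples of distinct points, of the walk whose steps are
uniformly random words of length `K` of order `log n` in the given permutations, and let `J` be the
matrix with all entries `1 / N`, where `N ≤ n ^ r` is the number of tuples. In the Frobenius norm,
`‖T - J‖ ^ 2 = 𝔼 f g, #{x | f x = g x} - 1`, where `f` and `g` are two independent such words. If
`‖T - J‖ ^ 2 < 1 / √n` then `T ^ (4 r) - J = (T - J) ^ (4 r)` has norm less than `1 / N`, so that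
all entries of `T ^ (4 r)` are positive and any tuple is led to any other by a word of length
`4 r K`. It therefore suffices to show that the expectation of `‖T - J‖ ^ 2` is at most
`polylog n / n`.

Equal words contribute at most `1 / n`, as there are at least `n ^ (r + 1)` words. For distinct
words, cancelling common letters at both ends, we may assume that the first letters differ and so
do the last ones. If the words agree at a tuple `x`, every vertex of the graph explored by them from
the entries of `x` has degree at least two, so this graph has at least as many edges as vertices.
If it has more, then `r + 1` of the queries made while exploring it returned to a visited vertex,
which has probability `O((polylog n / n) ^ (r + 1))` for each of the at most `n ^ r` tuples. If it
has equally many, then it consists of disjoint cycles, one through each entry of `x`; the expected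
number of such `x` is at most one, because a prescribed set of `m` edges is present with probability
at most `1 / (n (n - 1) ⋯ (n - m + 1))`, the reciprocal of the number of injective listings of the
`m` vertices.
-/

namespace RandomPermutation

open Finset
open Equiv (Perm)
open scoped BigOperators Pointwise Matrix.Norms.Frobenius

theorem dens_le_expect_div {Ω : Type*} [Fintype Ω] {A : Finset Ω} {f : Ω → ℝ} {c : ℝ} (hc : 0 < c)
    (hf : ∀ ω, 0 ≤ f ω) (hA : ∀ ω ∈ A, c ≤ f ω) : (A.dens : ℝ) ≤ (𝔼 ω, f ω) / c := by
  rw [le_div_iff₀ hc, Fintype.expect_eq_sum_div_card, nnratCast_dens, div_mul_eq_mul_div]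
  gcongr
  calc #A * c = ∑ _ω ∈ A, c := by rw [sum_const, nsmul_eq_mul]
    _ ≤ ∑ ω ∈ A, f ω := sum_le_sum hA
    _ ≤ ∑ ω, f ω := sum_le_univ_sum_of_nonneg hf

theorem expect_card_filter_eq_card_div {Ω X : Type*} [Fintype Ω] [Fintype X] (A : Ω → X → Prop)
    [∀ ω, DecidablePred (A ω)] :
    𝔼 ω, (#{x | A ω x} : ℝ) = #{q : Ω × X | A q.1 q.2} / Fintype.card Ω := by
  simp only [Fintype.expect_eq_sum_div_card, card_filter, Fintype.sum_prod_type, Nat.cast_sum]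

theorem expect_card_filter_eq_sum_dens {Ω X : Type*} [Fintype Ω] [Fintype X] (A : Ω → X → Prop)
    [∀ ω, DecidablePred (A ω)] :
    𝔼 ω, (#{x | A ω x} : ℝ) = ∑ x, (dens {ω | A ω x} : ℝ) := by
  rw [expect_card_filter_eq_card_div]
  simp only [nnratCast_dens, card_filter, Fintype.sum_prod_type_right, Nat.cast_sum, sum_div]

theorem card_subtype_div_card_eq_one_sub_dens {Ω : Type*} [Fintype Ω] [Nonempty Ω] (P : Ω → Prop)
    [DecidablePred P] :
    (Nat.card {ω // P ω} : ℝ) / Nat.card Ω = 1 - (dens {ω | ¬ P ω} : ℝ) := by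
  have hsum := card_filter_add_card_filter_not (s := (univ : Finset Ω)) P
  have hΩ : (Fintype.card Ω : ℝ) ≠ 0 := by simp
  rw [Nat.card_eq_fintype_card, Nat.card_eq_fintype_card, Fintype.card_subtype, nnratCast_dens,
    eq_sub_iff_add_eq, ← add_div, div_eq_one_iff_eq hΩ]
  exact_mod_cast hsum

theorem card_embedding_le_pow {τ α : Type*} [Fintype τ] [Fintype α] [Fintype (τ ↪ α)] :
    (Fintype.card (τ ↪ α) : ℝ) ≤ (Fintype.card α : ℝ) ^ Fintype.card τ := by
  rw [Fintype.card_embedding_eq]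
  exact_mod_cast Nat.descFactorial_le_pow _ _

variable {ι α : Type*}

section Walk

/-- The composition of the first `t` letters of the infinite word `w`, evaluated at the
permutations `π`; the letter `w 0` acts first. -/
def walk (π : ι → Perm α) (w : ℕ → ι) : ℕ → Perm α
  | 0 => 1
  | t + 1 => π (w t) * walk π w t

theorem walk_succ_apply (π : ι → Perm α) (w : ℕ → ι) (t : ℕ) (a : α) :
    walk π w (t + 1) a = π (w t) (walk π w t a) := rfl

theorem walk_succ' (π : ι → Perm α) (w : ℕ → ι) (t : ℕ) :
    walk π w (t + 1) = walk π (fun s => w (s + 1)) t * π (w 0) := by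
  induction t with
  | zero => simp [walk]
  | succ t ih => rw [walk, ih, walk, mul_assoc]

theorem walk_mem_range_pow (π : ι → Perm α) (w : ℕ → ι) (t : ℕ) :
    walk π w t ∈ Set.range π ^ t := by
  induction t with
  | zero => simp [walk]
  | succ t ih => rw [pow_succ']; exact Set.mul_mem_mul ⟨w t, rfl⟩ ih

end Walk

section Cylinder

variable [Fintype ι] [DecidableEq ι] [Fintype α] [DecidableEq α]

/-- The event that a family of permutations agrees with `p` at every pair
`(generator, point)` in `E`. -/
def cylinder (p : ι → Perm α) (E : Finset (ι × α)) : Finset (ι → Perm α) :=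
  {π | ∀ e ∈ E, π e.1 e.2 = p e.1 e.2}

theorem mem_cylinder {p π : ι → Perm α} {E : Finset (ι × α)} :
    π ∈ cylinder p E ↔ ∀ e ∈ E, π e.1 e.2 = p e.1 e.2 := by
  simp [cylinder]

theorem cylinder_insert (p : ι → Perm α) (e : ι × α) (E : Finset (ι × α)) :
    cylinder p (insert e E) = {π ∈ cylinder p E | π e.1 e.2 = p e.1 e.2} := by
  ext π
  simp only [mem_cylinder, mem_filter, forall_mem_insert, and_comm]

-- Composing `π j` with the transposition of `b` and `c` exchanges the two events.
theorem card_cylinder_filter_le_of_forall_ne (p : ι → Perm α) {E : Finset (ι × α)} {j : ι} {a : α}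
    (he : (j, a) ∉ E) (b : α) {c : α} (hc : ∀ e ∈ E, e.1 = j → p j e.2 ≠ c) :
    #{π ∈ cylinder p E | π j a = b} ≤ #{π ∈ cylinder p E | π j a = c} := by
  refine card_le_card_of_injOn (fun π => Function.update π j (Equiv.swap b c * π j)) ?_ ?_
  · intro π hπ
    obtain ⟨hπE, rfl⟩ : π ∈ cylinder p E ∧ π j a = b := by simpa using hπ
    simp only [mem_coe, mem_filter, mem_cylinder, Function.update_self, Perm.mul_apply,
      Equiv.swap_apply_left, and_true]
    rintro ⟨i, a'⟩ hi
    have hpi : π i a' = p i a' := mem_cylinder.1 hπE _ hi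
    obtain rfl | hij := eq_or_ne i j
    · have ha : a' ≠ a := fun h => he (h ▸ hi)
      rw [Function.update_self, Perm.mul_apply, Equiv.swap_apply_of_ne_of_ne, hpi]
      · exact (π i).injective.ne ha
      · exact hpi ▸ hc _ hi rfl
    · rw [Function.update_of_ne hij, hpi]
  · intro π _ ρ _ h
    ext i : 1
    obtain rfl | hij := eq_or_ne i j
    · simpa using congrFun h i
    · simpa [hij] using congrFun h i

theorem card_cylinder_filter_mul_le (p : ι → Perm α) {E : Finset (ι × α)} {j : ι} {a : α}
    (he : (j, a) ∉ E) (b : α) :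
    #{π ∈ cylinder p E | π j a = b} * (Fintype.card α - #E) ≤ #(cylinder p E) := by
  set T : Finset α := E.image fun e => p j e.2
  have hT : Fintype.card α - #E ≤ #Tᶜ := by
    rw [card_compl]
    exact Nat.sub_le_sub_left card_image_le _
  calc #{π ∈ cylinder p E | π j a = b} * (Fintype.card α - #E)
      ≤ #{π ∈ cylinder p E | π j a = b} * #Tᶜ := Nat.mul_le_mul_left _ hT
    _ = ∑ _c ∈ Tᶜ, #{π ∈ cylinder p E | π j a = b} := by rw [sum_const, smul_eq_mul, mul_comm]
    _ ≤ ∑ c ∈ Tᶜ, #{π ∈ cylinder p E | π j a = c} := by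
        refine sum_le_sum fun c hc => ?_
        refine card_cylinder_filter_le_of_forall_ne p he b fun e he' _ h => ?_
        exact mem_compl.1 hc (mem_image.2 ⟨e, he', h⟩)
    _ ≤ ∑ c, #{π ∈ cylinder p E | π j a = c} := sum_le_univ_sum_of_nonneg fun _ => Nat.zero_le _
    _ = #(cylinder p E) := (card_eq_sum_card_fiberwise fun _ _ => mem_coe.2 (mem_univ _)).symm

theorem card_cylinder_mul_descFactorial_le (p : ι → Perm α) (E : Finset (ι × α)) :
    #(cylinder p E) * (Fintype.card α).descFactorial #E ≤ Fintype.card (ι → Perm α) := by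
  induction E using Finset.induction_on with
  | empty => simpa using card_le_univ (cylinder p ∅)
  | insert e E he ih =>
    rw [cylinder_insert, card_insert_of_notMem he, Nat.descFactorial_succ, ← mul_assoc]
    exact (Nat.mul_le_mul_right _ (card_cylinder_filter_mul_le p he _)).trans ih

end Cylinder

section Walkers

variable {ζ : Type*} [Fintype ζ] [DecidableEq α] {π p : ι → Perm α} {w : ζ → ℕ → ι} {x : ζ → α}
  {k : ζ → ℕ}

/-- The points met when, for each `z`, a walker starting at `x z` makes `k z` steps along the
word `w z`: the vertices of the explored subgraph. -/
def visits (π : ι → Perm α) (w : ζ → ℕ → ι) (x : ζ → α) (k : ζ → ℕ) : Finset α :=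
  univ.biUnion fun z => (range (k z + 1)).image fun t => walk π (w z) t (x z)

theorem mem_visits {a : α} :
    a ∈ visits π w x k ↔ ∃ z, ∃ t ≤ k z, walk π (w z) t (x z) = a := by
  simp [visits]

theorem card_visits_le (π : ι → Perm α) (w : ζ → ℕ → ι) (x : ζ → α) (k : ζ → ℕ) :
    #(visits π w x k) ≤ ∑ z, (k z + 1) :=
  card_biUnion_le.trans <| sum_le_sum fun _ _ => card_image_le.trans (card_range _).le

theorem visits_zero (π : ι → Perm α) (w : ζ → ℕ → ι) (x : ζ → α) :
    visits π w x 0 = univ.image x := by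
  ext a; simp [mem_visits, walk]

theorem visits_add_single [DecidableEq ζ] (z : ζ) :
    visits π w x (k + Pi.single z 1) =
      insert (walk π (w z) (k z + 1) (x z)) (visits π w x k) := by
  ext a
  simp only [mem_insert, mem_visits, Pi.add_apply]
  constructor
  · rintro ⟨z', t, ht, rfl⟩
    obtain rfl | hz := eq_or_ne z' z
    · rw [Pi.single_eq_same, Nat.le_add_one_iff] at ht
      exact ht.elim (fun h => .inr ⟨_, t, h, rfl⟩) fun h => .inl (h ▸ rfl)
    · exact .inr ⟨z', t, by simpa [hz] using ht, rfl⟩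
  · rintro (rfl | ⟨z', t, ht, rfl⟩)
    · exact ⟨z, k z + 1, by simp, rfl⟩
    · exact ⟨z', t, by omega, rfl⟩

variable [DecidableEq ι]

/-- The pairs `(generator, point)` queried when, for each `z`, a walker starting at `x z` makes
`k z` steps along the word `w z`: the edges of the explored subgraph. -/
def steps (π : ι → Perm α) (w : ζ → ℕ → ι) (x : ζ → α) (k : ζ → ℕ) : Finset (ι × α) :=
  univ.biUnion fun z => (range (k z)).image fun t => (w z t, walk π (w z) t (x z))

theorem mem_steps {e : ι × α} :
    e ∈ steps π w x k ↔ ∃ z, ∃ t < k z, (w z t, walk π (w z) t (x z)) = e := by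
  simp [steps]

theorem card_steps_le (π : ι → Perm α) (w : ζ → ℕ → ι) (x : ζ → α) (k : ζ → ℕ) :
    #(steps π w x k) ≤ ∑ z, k z :=
  card_biUnion_le.trans <| sum_le_sum fun _ _ => card_image_le.trans (card_range _).le

theorem steps_zero (π : ι → Perm α) (w : ζ → ℕ → ι) (x : ζ → α) : steps π w x 0 = ∅ := by
  ext e; simp [mem_steps]

theorem steps_add_single [DecidableEq ζ] (z : ζ) :
    steps π w x (k + Pi.single z 1) =
      insert (w z (k z), walk π (w z) (k z) (x z)) (steps π w x k) := by
  ext e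
  simp only [mem_insert, mem_steps, Pi.add_apply]
  constructor
  · rintro ⟨z', t, ht, rfl⟩
    obtain rfl | hz := eq_or_ne z' z
    · rw [Pi.single_eq_same, Nat.lt_succ_iff_lt_or_eq] at ht
      exact ht.elim (fun h => .inr ⟨_, t, h, rfl⟩) fun h => .inl (h ▸ rfl)
    · exact .inr ⟨z', t, by simpa [hz] using ht, rfl⟩
  · rintro (rfl | ⟨z', t, ht, rfl⟩)
    · exact ⟨z, k z, by simp, rfl⟩
    · exact ⟨z', t, by omega, rfl⟩

theorem apply_mem_visits {e : ι × α} (he : e ∈ steps π w x k) : π e.1 e.2 ∈ visits π w x k := by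
  obtain ⟨z, t, ht, rfl⟩ := mem_steps.1 he
  exact mem_visits.2 ⟨z, t + 1, ht, rfl⟩

section Cylinder

variable [Fintype ι] [Fintype α]

theorem walk_eq_of_mem_cylinder_steps (h : π ∈ cylinder p (steps p w x k)) {z : ζ} {t : ℕ}
    (ht : t ≤ k z) : walk π (w z) t (x z) = walk p (w z) t (x z) := by
  induction t with
  | zero => rfl
  | succ t ih =>
    rw [walk_succ_apply, ih (by omega), walk_succ_apply]
    exact mem_cylinder.1 h _ (mem_steps.2 ⟨z, t, ht, rfl⟩)

theorem steps_eq_of_mem_cylinder_steps (h : π ∈ cylinder p (steps p w x k)) :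
    steps π w x k = steps p w x k := by
  ext e
  simp only [mem_steps]
  refine exists_congr fun z => exists_congr fun t => and_congr_right fun ht => ?_
  rw [walk_eq_of_mem_cylinder_steps h ht.le]

theorem visits_eq_of_mem_cylinder_steps (h : π ∈ cylinder p (steps p w x k)) :
    visits π w x k = visits p w x k := by
  ext a
  simp only [mem_visits]
  refine exists_congr fun z => exists_congr fun t => and_congr_right fun ht => ?_
  rw [walk_eq_of_mem_cylinder_steps h ht]

-- The cylinders over the explored edges partition the space of families of permutations.
theorem mem_cylinder_steps_iff :
    π ∈ cylinder p (steps p w x k) ↔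
      cylinder π (steps π w x k) = cylinder p (steps p w x k) := by
  refine ⟨fun h => ?_, fun h => h ▸ mem_cylinder.2 fun _ _ => rfl⟩
  ext ρ
  rw [steps_eq_of_mem_cylinder_steps h, mem_cylinder, mem_cylinder]
  exact forall₂_congr fun e he => by rw [mem_cylinder.1 h e he]

theorem expect_le_expect_of_cylinder_steps (w : ζ → ℕ → ι) (x : ζ → α) (k : ζ → ℕ)
    {f g : (ι → Perm α) → ℝ}
    (h : ∀ p, ∑ π ∈ cylinder p (steps p w x k), f π ≤ ∑ π ∈ cylinder p (steps p w x k), g π) :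
    𝔼 π, f π ≤ 𝔼 π, g π := by
  have hfib (F : (ι → Perm α) → ℝ) :
      ∑ π, F π = ∑ C ∈ univ.image fun p => cylinder p (steps p w x k),
        ∑ π with cylinder π (steps π w x k) = C, F π :=
    (sum_fiberwise_of_maps_to (fun π _ => mem_image_of_mem _ (mem_univ π)) F).symm
  simp only [Fintype.expect_eq_sum_div_card, hfib]
  gcongr ?_ / _
  refine sum_le_sum fun C hC => ?_
  obtain ⟨p, -, rfl⟩ := mem_image.1 hC
  simpa only [← mem_cylinder_steps_iff, filter_univ_mem] using h p

end Cylinder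

/-- The exponential weight `s ^ (#steps - #visits)`. Its mean controls the probability that the
explored graph has more edges than vertices. -/
noncomputable def weight (s : ℝ) (π : ι → Perm α) (w : ζ → ℕ → ι) (x : ζ → α) (k : ζ → ℕ) : ℝ :=
  s ^ #(steps π w x k) / s ^ #(visits π w x k)

-- Only a new edge that leads back to a visited vertex increases the weight.
theorem weight_add_single_le [DecidableEq ζ] {s : ℝ} (hs : 0 < s) (z : ζ) :
    weight s π w x (k + Pi.single z 1) ≤ weight s π w x k *
      (1 + s * if (w z (k z), walk π (w z) (k z) (x z)) ∉ steps π w x k ∧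
        walk π (w z) (k z + 1) (x z) ∈ visits π w x k then 1 else 0) := by
  have h0 : 0 ≤ weight s π w x k := by unfold weight; positivity
  by_cases he : (w z (k z), walk π (w z) (k z) (x z)) ∈ steps π w x k
  · have hv : walk π (w z) (k z + 1) (x z) ∈ visits π w x k := apply_mem_visits he
    simp [weight, steps_add_single, visits_add_single, he, hv]
  by_cases hv : walk π (w z) (k z + 1) (x z) ∈ visits π w x k
  · have : weight s π w x (k + Pi.single z 1) = weight s π w x k * s := by
      simp only [weight, steps_add_single, visits_add_single, card_insert_of_notMem he,
        insert_eq_of_mem hv, pow_succ]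
      ring
    rw [this, if_pos ⟨he, hv⟩]
    gcongr
    linarith
  · have : weight s π w x (k + Pi.single z 1) = weight s π w x k := by
      simp only [weight, steps_add_single, visits_add_single, card_insert_of_notMem he,
        card_insert_of_notMem hv, pow_succ]
      exact mul_div_mul_right _ _ hs.ne'
    simp [this, hv]

variable [Fintype ι] [Fintype α]

theorem card_cylinder_steps_return_le {q : ℝ} (hq : 0 ≤ q) (z : ζ)
    (hpq : #(visits p w x k) ≤ q * (Fintype.card α - #(steps p w x k))) :
    (#{π ∈ cylinder p (steps p w x k) |
        (w z (k z), walk π (w z) (k z) (x z)) ∉ steps π w x k ∧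
        walk π (w z) (k z + 1) (x z) ∈ visits π w x k} : ℝ) ≤
      q * #(cylinder p (steps p w x k)) := by
  have hV : (0 : ℝ) < #(visits p w x k) :=
    Nat.cast_pos.2 (card_pos.2 ⟨x z, mem_visits.2 ⟨z, 0, Nat.zero_le _, rfl⟩⟩)
  have hn : (0 : ℝ) < Fintype.card α - #(steps p w x k) :=
    pos_of_mul_pos_right (hV.trans_le hpq) hq
  by_cases he : (w z (k z), walk p (w z) (k z) (x z)) ∈ steps p w x k
  · rw [filter_false_of_mem]
    · simpa using by positivity
    · intro π hπ
      rw [steps_eq_of_mem_cylinder_steps hπ, walk_eq_of_mem_cylinder_steps hπ le_rfl]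
      exact fun h => h.1 he
  set a := walk p (w z) (k z) (x z)
  have hsub : {π ∈ cylinder p (steps p w x k) |
        (w z (k z), walk π (w z) (k z) (x z)) ∉ steps π w x k ∧
        walk π (w z) (k z + 1) (x z) ∈ visits π w x k} ⊆
      (visits p w x k).biUnion fun b => {π ∈ cylinder p (steps p w x k) | π (w z (k z)) a = b} := by
    intro π hπ
    obtain ⟨hπ, -, hv⟩ := mem_filter.1 hπ
    rw [walk_succ_apply, walk_eq_of_mem_cylinder_steps hπ le_rfl,
      visits_eq_of_mem_cylinder_steps hπ] at hv
    exact mem_biUnion.2 ⟨_, hv, mem_filter.2 ⟨hπ, rfl⟩⟩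
  refine le_of_mul_le_mul_right ?_ hn
  calc _ ≤ (∑ b ∈ visits p w x k, (#{π ∈ cylinder p (steps p w x k) | π (w z (k z)) a = b} : ℝ)) *
        (Fintype.card α - #(steps p w x k)) := by
        gcongr
        exact_mod_cast (card_le_card hsub).trans card_biUnion_le
    _ ≤ ∑ _b ∈ visits p w x k, (#(cylinder p (steps p w x k)) : ℝ) := by
        rw [sum_mul]
        refine sum_le_sum fun b _ => ?_
        have := card_cylinder_filter_mul_le p he b
        rw [← Nat.cast_sub (by exact_mod_cast (sub_pos.1 hn).le)]
        exact_mod_cast this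
    _ ≤ q * (Fintype.card α - #(steps p w x k)) * #(cylinder p (steps p w x k)) := by
        rw [sum_const, nsmul_eq_mul]
        gcongr
    _ = _ := by ring

theorem expect_weight_add_single_le [DecidableEq ζ] {s q : ℝ} (hs : 0 < s) (hq : 0 ≤ q) (z : ζ)
    (hkq : ∀ π, #(visits π w x k) ≤ q * (Fintype.card α - #(steps π w x k))) :
    𝔼 π : ι → Perm α, weight s π w x (k + Pi.single z 1) ≤
      (1 + s * q) * 𝔼 π : ι → Perm α, weight s π w x k := by
  rw [mul_expect]
  refine (expect_le_expect fun π _ => weight_add_single_le hs z).trans ?_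
  refine expect_le_expect_of_cylinder_steps w x k fun p => ?_
  have hw {π} (hπ : π ∈ cylinder p (steps p w x k)) : weight s π w x k = weight s p w x k := by
    rw [weight, steps_eq_of_mem_cylinder_steps hπ, visits_eq_of_mem_cylinder_steps hπ, weight]
  have h0 : 0 ≤ weight s p w x k := by unfold weight; positivity
  have hret := card_cylinder_steps_return_le hq z (hkq p)
  calc _ = ∑ π ∈ cylinder p (steps p w x k), weight s p w x k * (1 + s * _) :=
        sum_congr rfl fun π hπ => by rw [hw hπ]
    _ = weight s p w x k * (#(cylinder p (steps p w x k)) + s * _) := by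
        rw [← mul_sum, sum_add_distrib, ← mul_sum, sum_boole, sum_const, nsmul_one]
    _ ≤ weight s p w x k * (#(cylinder p (steps p w x k)) +
        s * (q * #(cylinder p (steps p w x k)))) := by gcongr
    _ = ∑ _π ∈ cylinder p (steps p w x k), (1 + s * q) * weight s p w x k := by
        rw [sum_const, nsmul_eq_mul]
        ring
    _ = _ := sum_congr rfl fun π hπ => by rw [hw hπ]

theorem expect_weight_le {s q : ℝ} (hs : 0 < s) (hq : 0 ≤ q)
    (hkq : ((∑ z, (k z + 1) : ℕ) : ℝ) ≤ q * (Fintype.card α - (∑ z, k z : ℕ))) :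
    𝔼 π : ι → Perm α, weight s π w x k ≤ (1 + s * q) ^ (∑ z, k z) / s ^ #(univ.image x) := by
  classical
  induction hm : ∑ z, k z generalizing k with
  | zero =>
    obtain rfl : k = 0 := by simpa [funext_iff] using hm
    simp [weight, steps_zero, visits_zero]
  | succ m ih =>
    obtain ⟨z, hz⟩ : ∃ z, k z ≠ 0 := by
      by_contra! h
      simp [h] at hm
    obtain ⟨k, rfl⟩ : ∃ k', k = k' + Pi.single z 1 :=
      ⟨k - Pi.single z 1, by ext z'; obtain rfl | h := eq_or_ne z' z <;> simp [*]; omega⟩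
    have hm' : ∑ z, k z = m := by simpa [sum_add_distrib] using hm
    have hkq' : ((∑ z, (k z + 1) : ℕ) : ℝ) ≤ q * (Fintype.card α - (∑ z, k z : ℕ)) := by
      refine le_trans ?_ (hkq.trans (mul_le_mul_of_nonneg_left (sub_le_sub_left ?_ _) hq)) <;>
      · exact Nat.cast_le.2 (sum_le_sum fun _ _ => by simp)
    calc _ ≤ (1 + s * q) * 𝔼 π : ι → Perm α, weight s π w x k :=
          expect_weight_add_single_le hs hq z fun π => by
            refine le_trans (Nat.cast_le.2 (card_visits_le ..)) (hkq'.trans ?_)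
            exact mul_le_mul_of_nonneg_left
              (sub_le_sub_left (Nat.cast_le.2 (card_steps_le ..)) _) hq
      _ ≤ _ := by
          rw [pow_succ', mul_div_assoc]
          gcongr
          exact ih hkq' hm'

theorem dens_card_visits_lt_card_steps_le (w : ζ → ℕ → ι) (x : ζ → α) {L : ℝ}
    (hL : 1 ≤ L) (hkL : ((∑ z, (k z + 1) : ℕ) : ℝ) ≤ L) (hn : 2 * L ^ 2 ≤ Fintype.card α) :
    (dens {π : ι → Perm α | #(visits π w x k) < #(steps π w x k)} : ℝ) ≤
      Real.exp 1 * (2 * L ^ 2 / Fintype.card α) ^ (#(univ.image x) + 1) := by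
  classical
  set n := (Fintype.card α : ℝ)
  set s : ℝ := n / (2 * L ^ 2)
  have hn0 : 0 < n := lt_of_lt_of_le (by positivity) hn
  have hs : 1 ≤ s := (one_le_div (by positivity)).2 hn
  have hk : ((∑ z, k z : ℕ) : ℝ) ≤ L :=
    le_trans (Nat.cast_le.2 (sum_le_sum fun _ _ => Nat.le_succ _)) hkL
  have hsq : s * (2 * L / n) = 1 / L := by simp only [s]; field_simp
  have hkq : ((∑ z, (k z + 1) : ℕ) : ℝ) ≤ 2 * L / n * (n - (∑ z, k z : ℕ)) := by
    rw [div_mul_eq_mul_div, le_div_iff₀ hn0]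
    nlinarith
  have hexp : (1 + s * (2 * L / n)) ^ (∑ z, k z) ≤ Real.exp 1 := by
    rw [hsq, add_comm]
    calc (1 / L + 1) ^ (∑ z, k z) ≤ Real.exp (1 / L) ^ (∑ z, k z) := by
          gcongr
          exact Real.add_one_le_exp _
      _ = Real.exp ((∑ z, k z : ℕ) * (1 / L)) := (Real.exp_nat_mul _ _).symm
      _ ≤ Real.exp 1 := by
          rw [Real.exp_le_exp, mul_one_div]
          exact div_le_one_of_le₀ hk (by positivity)
  calc _ ≤ (𝔼 π : ι → Perm α, weight s π w x k) / s := by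
        refine dens_le_expect_div (by positivity) (fun π => by unfold weight; positivity) ?_
        intro π hπ
        rw [weight, le_div_iff₀ (by positivity), ← pow_succ']
        exact pow_le_pow_right₀ hs (mem_filter.1 hπ).2
    _ ≤ Real.exp 1 / s ^ #(univ.image x) / s := by
        gcongr
        exact (expect_weight_le (by positivity) (by positivity) hkq).trans (by gcongr)
    _ = _ := by
        rw [div_div, ← pow_succ, div_eq_mul_inv, ← inv_pow, inv_div]

end Walkers

section TwoWords

variable {τ : Type*} {π p : ι → Perm α} {w : Bool → ℕ → ι} {x : τ → α} {k : ℕ}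

/-- The words `w false` and `w true` lead each entry of the tuple `x` to the same point in `k`
steps. -/
abbrev Meets (π : ι → Perm α) (w : Bool → ℕ → ι) (x : τ → α) (k : ℕ) : Prop :=
  ∀ i, walk π (w false) k (x i) = walk π (w true) k (x i)

theorem Meets.walk_eq (h : Meets π w x k) (s s' : Bool) (i : τ) :
    walk π (w s) k (x i) = walk π (w s') k (x i) := by
  cases s <;> cases s' <;> first | rfl | exact h i | exact (h i).symm

theorem meets_succ_iff_of_last_eq (hk : w false k = w true k) :
    Meets π w x (k + 1) ↔ Meets π w x k := by
  simp [Meets, walk_succ_apply, hk]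

/-- The closed walks obtained, when the two words meet at `x`, by following `w false` from each
`x i` and returning along `w true`. The point `(i, false, t)` is the one reached after `t` steps
along `w false`, while `(i, true, t)` is reached after `t + 1` steps along `w true`, so that each
point of the closed walk is listed exactly once. -/
def loop (π : ι → Perm α) (w : Bool → ℕ → ι) (x : τ → α) (k : ℕ) (c : τ × Bool × Fin k) : α :=
  walk π (w c.2.1) (c.2.2 + c.2.1.toNat) (x c.1)

theorem exists_forall_walk_eq_loop (i : τ) (s : Bool) {t : ℕ} (ht : t ≤ k + 1) :
    ∃ c, ∀ (π : ι → Perm α) (w : Bool → ℕ → ι) (x : τ → α), Meets π w x (k + 1) →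
      walk π (w s) t (x i) = loop π w x (k + 1) (i, c) := by
  obtain rfl | ht := ht.eq_or_lt
  · exact ⟨(true, Fin.last k), fun _ _ _ h => h.walk_eq s true i⟩
  cases s
  · exact ⟨(false, ⟨t, ht⟩), fun _ _ _ _ => rfl⟩
  cases t with
  | zero => exact ⟨(false, 0), fun _ _ _ _ => rfl⟩
  | succ t => exact ⟨(true, ⟨t, by omega⟩), fun _ _ _ _ => rfl⟩

variable [Fintype τ] [DecidableEq α]

/-- The points met by the entries of `x` when each of them follows both words for `k` steps. -/
abbrev pairVisits (π : ι → Perm α) (w : Bool → ℕ → ι) (x : τ → α) (k : ℕ) : Finset α :=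
  visits π (fun z : τ × Bool => w z.2) (fun z => x z.1) fun _ => k

theorem walk_mem_pairVisits (i : τ) (s : Bool) {t : ℕ} (ht : t ≤ k) :
    walk π (w s) t (x i) ∈ pairVisits π w x k :=
  mem_visits.2 ⟨(i, s), t, ht, rfl⟩

theorem Meets.pairVisits_eq (h : Meets π w x (k + 1)) :
    pairVisits π w x (k + 1) = univ.image (loop π w x (k + 1)) := by
  ext a
  simp only [mem_visits, mem_image, mem_univ, true_and]
  constructor
  · rintro ⟨⟨i, s⟩, t, ht, rfl⟩
    obtain ⟨c, hc⟩ := exists_forall_walk_eq_loop (ι := ι) (α := α) i s ht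
    exact ⟨_, (hc π w x h).symm⟩
  · rintro ⟨⟨i, s, t⟩, rfl⟩
    exact ⟨(i, s), t + s.toNat, by have := s.toNat_le; omega, rfl⟩

variable [DecidableEq ι]

/-- The pairs `(generator, point)` queried by the entries of `x` when each of them follows both
words for `k` steps. -/
abbrev pairSteps (π : ι → Perm α) (w : Bool → ℕ → ι) (x : τ → α) (k : ℕ) : Finset (ι × α) :=
  steps π (fun z : τ × Bool => w z.2) (fun z => x z.1) fun _ => k

theorem mem_pairSteps_of_lt (i : τ) (s : Bool) {t : ℕ} (ht : t < k) :
    (w s t, walk π (w s) t (x i)) ∈ pairSteps π w x k :=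
  mem_steps.2 ⟨(i, s), t, ht, rfl⟩

/-- The set of explored edges starting at `a`. -/
def outEdges (π : ι → Perm α) (w : Bool → ℕ → ι) (x : τ → α) (k : ℕ) (a : α) : Finset (ι × α) :=
  {e ∈ pairSteps π w x k | e.2 = a}

/-- The set of explored edges ending at `a`. -/
def inEdges (π : ι → Perm α) (w : Bool → ℕ → ι) (x : τ → α) (k : ℕ) (a : α) : Finset (ι × α) :=
  {e ∈ pairSteps π w x k | π e.1 e.2 = a}

theorem mem_outEdges (i : τ) (s : Bool) {t : ℕ} (ht : t < k) :
    (w s t, walk π (w s) t (x i)) ∈ outEdges π w x k (walk π (w s) t (x i)) :=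
  mem_filter.2 ⟨mem_pairSteps_of_lt i s ht, rfl⟩

theorem mem_inEdges (i : τ) (s : Bool) {t : ℕ} (ht : t < k) :
    (w s t, walk π (w s) t (x i)) ∈ inEdges π w x k (walk π (w s) (t + 1) (x i)) :=
  mem_filter.2 ⟨mem_pairSteps_of_lt i s ht, rfl⟩

theorem card_outEdges_pos (π : ι → Perm α) (w : Bool → ℕ → ι) (x : τ → α) (i : τ) (s : Bool) {t : ℕ}
    (ht : t < k) : 0 < #(outEdges π w x k (walk π (w s) t (x i))) :=
  card_pos.2 ⟨_, mem_outEdges i s ht⟩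

theorem card_inEdges_pos (π : ι → Perm α) (w : Bool → ℕ → ι) (x : τ → α) (i : τ) (s : Bool) {t : ℕ}
    (ht : t < k) : 0 < #(inEdges π w x k (walk π (w s) (t + 1) (x i))) :=
  card_pos.2 ⟨_, mem_inEdges i s ht⟩

theorem two_le_card_outEdges (h0 : w false 0 ≠ w true 0) (i : τ) :
    2 ≤ #(outEdges π w x (k + 1) (x i)) :=
  one_lt_card.2 ⟨_, mem_outEdges i false k.succ_pos, _, mem_outEdges i true k.succ_pos,
    fun h => h0 (congrArg Prod.fst h)⟩

theorem Meets.two_le_card_inEdges (h : Meets π w x (k + 1)) (hk : w false k ≠ w true k)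
    (i : τ) (s : Bool) : 2 ≤ #(inEdges π w x (k + 1) (walk π (w s) (k + 1) (x i))) :=
  one_lt_card.2 ⟨_, h.walk_eq false s i ▸ mem_inEdges i false k.lt_succ_self,
    _, h.walk_eq true s i ▸ mem_inEdges i true k.lt_succ_self, fun h => hk (congrArg Prod.fst h)⟩

theorem Meets.two_le_card_outEdges_add_card_inEdges (h : Meets π w x (k + 1))
    (h0 : w false 0 ≠ w true 0) (hk : w false k ≠ w true k) {a : α}
    (ha : a ∈ pairVisits π w x (k + 1)) :
    2 ≤ #(outEdges π w x (k + 1) a) + #(inEdges π w x (k + 1) a) := by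
  obtain ⟨⟨i, s⟩, t, ht, rfl⟩ := mem_visits.1 ha
  obtain rfl | ht := ht.eq_or_lt
  · exact le_add_left (h.two_le_card_inEdges hk i s)
  cases t with
  | zero => exact le_add_right (two_le_card_outEdges h0 i)
  | succ t =>
    have hout := card_outEdges_pos π w x i s ht
    have hin := card_inEdges_pos π w x i s (t.lt_succ_self.trans ht)
    exact Nat.add_le_add hout hin

theorem sum_card_outEdges_add_card_inEdges (π : ι → Perm α) (w : Bool → ℕ → ι) (x : τ → α)
    (k : ℕ) : ∑ a ∈ pairVisits π w x k, (#(outEdges π w x k a) + #(inEdges π w x k a)) =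
      2 * #(pairSteps π w x k) := by
  rw [sum_add_distrib, two_mul]
  congr 1
  · refine (card_eq_sum_card_fiberwise fun e he => ?_).symm
    obtain ⟨⟨i, s⟩, t, ht, rfl⟩ := mem_steps.1 he
    exact walk_mem_pairVisits i s ht.le
  · exact (card_eq_sum_card_fiberwise fun e he => apply_mem_visits he).symm

theorem Meets.card_pairVisits_le (h : Meets π w x (k + 1)) (h0 : w false 0 ≠ w true 0)
    (hk : w false k ≠ w true k) : #(pairVisits π w x (k + 1)) ≤ #(pairSteps π w x (k + 1)) := by
  have := sum_card_outEdges_add_card_inEdges π w x (k + 1)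
  have := card_nsmul_le_sum _ _ _ fun a => h.two_le_card_outEdges_add_card_inEdges h0 hk (a := a)
  rw [smul_eq_mul] at this
  omega

theorem Meets.card_outEdges_add_card_inEdges (h : Meets π w x (k + 1)) (h0 : w false 0 ≠ w true 0)
    (hk : w false k ≠ w true k) (hle : #(pairSteps π w x (k + 1)) ≤ #(pairVisits π w x (k + 1)))
    {a : α} (ha : a ∈ pairVisits π w x (k + 1)) :
    #(outEdges π w x (k + 1) a) + #(inEdges π w x (k + 1) a) = 2 := by
  have hdeg (b) := h.two_le_card_outEdges_add_card_inEdges h0 hk (a := b)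
  refine le_antisymm (not_lt.1 fun hlt => ?_) (hdeg a ha)
  have := sum_lt_sum hdeg ⟨a, ha, hlt⟩
  rw [sum_card_outEdges_add_card_inEdges, sum_const, smul_eq_mul] at this
  omega

section Coincidence

variable (h : Meets π w x (k + 1)) (h0 : w false 0 ≠ w true 0) (hk : w false k ≠ w true k)
  (hle : #(pairSteps π w x (k + 1)) ≤ #(pairVisits π w x (k + 1)))

include h h0 hk hle

theorem eq_zero_of_walk_eq_start {i i' : τ} {s' : Bool} {t' : ℕ} (ht' : t' ≤ k + 1)
    (heq : x i = walk π (w s') t' (x i')) : t' = 0 := by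
  by_contra hne
  obtain ⟨t', rfl⟩ := Nat.exists_eq_succ_of_ne_zero hne
  have hdeg := h.card_outEdges_add_card_inEdges h0 hk hle (walk_mem_pairVisits i s' (Nat.zero_le _))
  have hout := two_le_card_outEdges (π := π) (x := x) (k := k) h0 i
  have hin := card_inEdges_pos π w x i' s' ht'
  rw [walk, Perm.one_apply] at hdeg
  rw [← heq] at hin
  omega

theorem eq_of_walk_eq_finish {i i' : τ} {s s' : Bool} {t' : ℕ} (ht' : t' ≤ k + 1)
    (heq : walk π (w s) (k + 1) (x i) = walk π (w s') t' (x i')) : t' = k + 1 := by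
  refine ht'.antisymm (not_lt.1 fun hlt => ?_)
  have hdeg := h.card_outEdges_add_card_inEdges h0 hk hle (walk_mem_pairVisits i s le_rfl)
  have hin := h.two_le_card_inEdges hk i s
  have hout := card_outEdges_pos π w x i' s' hlt
  rw [← heq] at hout
  omega

-- Every vertex with an outgoing edge has at most one incoming one, so a coincidence can be traced
-- back to the starting points.
theorem eq_of_walk_eq_walk (hx : Function.Injective x) {i i' : τ} {s s' : Bool} {t t' : ℕ}
    (ht : t ≤ k) (ht' : t' ≤ k + 1) (heq : walk π (w s) t (x i) = walk π (w s') t' (x i')) :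
    t = t' ∧ i = i' ∧ (t = 0 ∨ s = s') := by
  induction t generalizing t' with
  | zero =>
    obtain rfl := eq_zero_of_walk_eq_start h h0 hk hle ht' heq
    exact ⟨rfl, hx heq, .inl rfl⟩
  | succ t ih =>
    obtain _ | t' := t'
    · exact absurd (eq_zero_of_walk_eq_start h h0 hk hle (by omega) heq.symm) t.succ_ne_zero
    have ht'k : t' + 1 ≠ k + 1 := by
      rintro h'
      rw [h'] at heq
      have := eq_of_walk_eq_finish h h0 hk hle (by omega) heq.symm
      omega
    have hdeg := h.card_outEdges_add_card_inEdges h0 hk hle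
      (walk_mem_pairVisits i s (show t + 1 ≤ k + 1 by omega))
    have hout := card_outEdges_pos π w x i s (show t + 1 < k + 1 by omega)
    have hedge := card_le_one.1 (show #(inEdges π w x (k + 1) _) ≤ 1 by omega)
      _ (mem_inEdges i s (by omega)) _ (heq ▸ mem_inEdges i' s' (by omega))
    obtain ⟨hlabel, hpoint⟩ := Prod.mk.inj hedge
    obtain ⟨rfl, rfl, hs⟩ := ih (by omega) (by omega) hpoint
    refine ⟨rfl, rfl, .inr (hs.elim (fun ht0 => ?_) id)⟩
    subst ht0
    cases s <;> cases s' <;> first | rfl | exact absurd hlabel h0 | exact absurd hlabel.symm h0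

theorem loop_injective (hx : Function.Injective x) : Function.Injective (loop π w x (k + 1)) := by
  rintro ⟨i, s, t, ht⟩ ⟨i', s', t', ht'⟩ heq
  simp only [loop] at heq
  have hs := s.toNat_le
  have hs' := s'.toNat_le
  by_cases hlast : t + s.toNat ≤ k
  · obtain ⟨htt, rfl, hss⟩ := eq_of_walk_eq_walk h h0 hk hle hx hlast (by omega) heq
    have : s = s' := by
      refine hss.elim (fun h => ?_) id
      cases s <;> cases s' <;> simp_all
    subst this
    simp_all
  · have htk : t + s.toNat = k + 1 := by omega
    rw [htk] at heq
    have htk' : t' + s'.toNat = k + 1 := eq_of_walk_eq_finish h h0 hk hle (by omega) heq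
    rw [htk', h.walk_eq s s'] at heq
    obtain rfl := hx ((walk π (w s') (k + 1)).injective heq)
    obtain ⟨rfl, rfl⟩ : t = k ∧ t' = k := by omega
    cases s <;> cases s' <;> simp_all

theorem card_pairSteps_eq (hx : Function.Injective x) :
    #(pairSteps π w x (k + 1)) = Fintype.card (τ × Bool × Fin (k + 1)) := by
  refine (hle.antisymm (h.card_pairVisits_le h0 hk)).trans ?_
  rw [h.pairVisits_eq, card_image_of_injective _ (loop_injective h h0 hk hle hx), card_univ]

end Coincidence

variable [Fintype ι] [Fintype α]

theorem Meets.eq_and_mem_cylinder_of_loop_eq {y : τ → α} (h : Meets π w x (k + 1))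
    (hp : Meets p w y (k + 1)) (heq : loop π w x (k + 1) = loop p w y (k + 1)) :
    x = y ∧ π ∈ cylinder p (pairSteps p w y (k + 1)) := by
  have hwalk (i : τ) (s : Bool) {t : ℕ} (ht : t ≤ k + 1) :
      walk π (w s) t (x i) = walk p (w s) t (y i) := by
    obtain ⟨c, hc⟩ := exists_forall_walk_eq_loop (ι := ι) (α := α) i s ht
    rw [hc π w x h, hc p w y hp, heq]
  refine ⟨funext fun i => hwalk i false (Nat.zero_le _), mem_cylinder.2 fun e he => ?_⟩
  obtain ⟨⟨i, s⟩, t, ht, rfl⟩ := mem_steps.1 he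
  have hnext := hwalk i s ht
  rwa [walk_succ_apply, walk_succ_apply, hwalk i s ht.le] at hnext

theorem card_filter_loop_eq_mul_le {r : ℕ} (l : τ × Bool × Fin (k + 1) → α)
    {S : Finset ((ι → Perm α) × (τ ↪ α))} (hS : ∀ q ∈ S, Meets q.1 w q.2 (k + 1))
    (hr : ∀ q ∈ S, #(pairSteps q.1 w q.2 (k + 1)) = r) :
    #{q ∈ S | loop q.1 w q.2 (k + 1) = l} * (Fintype.card α).descFactorial r ≤
      Fintype.card (ι → Perm α) := by
  obtain h | ⟨⟨p, y⟩, hpy⟩ := ({q ∈ S | loop q.1 w q.2 (k + 1) = l}).eq_empty_or_nonempty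
  · simp [h]
  obtain ⟨hpS, rfl⟩ := mem_filter.1 hpy
  have hfib : ∀ q ∈ ({q ∈ S | loop q.1 w q.2 (k + 1) = loop p w y (k + 1)} : Finset _),
      q.2 = y ∧ q.1 ∈ cylinder p (pairSteps p w y (k + 1)) := by
    intro q hq
    obtain ⟨hqS, hloop⟩ := mem_filter.1 hq
    obtain ⟨hy, hmem⟩ := (hS q hqS).eq_and_mem_cylinder_of_loop_eq (hS _ hpS) hloop
    exact ⟨DFunLike.coe_injective hy, hmem⟩
  refine le_trans (Nat.mul_le_mul_right _ ?_) (hr _ hpS ▸ card_cylinder_mul_descFactorial_le p _)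
  exact card_le_card_of_injOn Prod.fst (fun q hq => (hfib q hq).2) fun q hq q' hq' h =>
    Prod.ext h ((hfib q hq).1.trans (hfib q' hq').1.symm)

-- Such a pair `(π, x)` is determined, up to a cylinder of families of permutations, by its
-- injective loop, and the number of injective loops compensates the size of the cylinder.
theorem card_meets_and_card_pairSteps_le (h0 : w false 0 ≠ w true 0) (hk : w false k ≠ w true k) :
    #{q : (ι → Perm α) × (τ ↪ α) | Meets q.1 w q.2 (k + 1) ∧
        #(pairSteps q.1 w q.2 (k + 1)) ≤ #(pairVisits q.1 w q.2 (k + 1))} ≤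
      Fintype.card (ι → Perm α) := by
  classical
  set S : Finset ((ι → Perm α) × (τ ↪ α)) := {q | Meets q.1 w q.2 (k + 1) ∧
    #(pairSteps q.1 w q.2 (k + 1)) ≤ #(pairVisits q.1 w q.2 (k + 1))}
  have hmeets : ∀ q ∈ S, Meets q.1 w q.2 (k + 1) := fun q hq => (mem_filter.1 hq).2.1
  have hinj : ∀ q ∈ S, Function.Injective (loop q.1 w q.2 (k + 1)) := fun q hq =>
    loop_injective (hmeets q hq) h0 hk (mem_filter.1 hq).2.2 q.2.injective
  have hcard : ∀ q ∈ S, #(pairSteps q.1 w q.2 (k + 1)) = Fintype.card (τ × Bool × Fin (k + 1)) :=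
    fun q hq => card_pairSteps_eq (hmeets q hq) h0 hk (mem_filter.1 hq).2.2 q.2.injective
  set N := (Fintype.card α).descFactorial (Fintype.card (τ × Bool × Fin (k + 1))) with hN
  rw [← Fintype.card_embedding_eq] at hN
  obtain hempty | ⟨q, hq⟩ := S.eq_empty_or_nonempty
  · simp [hempty]
  refine Nat.le_of_mul_le_mul_right ?_ (hN ▸ Fintype.card_pos_iff.2 ⟨⟨_, hinj q hq⟩⟩ : 0 < N)
  have himage : #(S.image fun q => loop q.1 w q.2 (k + 1)) ≤ N := by
    rw [hN, ← card_univ]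
    refine (card_le_card fun l hl => ?_).trans
      (card_image_le (f := fun g : τ × Bool × Fin (k + 1) ↪ α => ⇑g))
    obtain ⟨q, hq, rfl⟩ := mem_image.1 hl
    exact mem_image.2 ⟨⟨_, hinj q hq⟩, mem_univ _, rfl⟩
  calc #S * N = ∑ l ∈ S.image fun q => loop q.1 w q.2 (k + 1),
        #{q ∈ S | loop q.1 w q.2 (k + 1) = l} * N := by
        rw [← sum_mul, ← card_eq_sum_card_image]
    _ ≤ #(S.image fun q => loop q.1 w q.2 (k + 1)) • Fintype.card (ι → Perm α) :=
        sum_le_card_nsmul _ _ _ fun l _ => card_filter_loop_eq_mul_le l hmeets hcard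
    _ ≤ Fintype.card (ι → Perm α) * N := by
        rw [smul_eq_mul, mul_comm]
        exact Nat.mul_le_mul_left _ himage

end TwoWords

section Collisions

variable [Fintype α] [DecidableEq α] {τ : Type*} [Fintype τ] {w : Bool → ℕ → ι} {k : ℕ} {L : ℝ}

theorem card_meets_succ_of_head_eq (π : ι → Perm α) (h0 : w false 0 = w true 0) :
    #{x : τ ↪ α | Meets π w x (k + 1)} =
      #{x : τ ↪ α | Meets π (fun s t => w s (t + 1)) x k} := by
  refine card_equiv ((Equiv.refl τ).embeddingCongr (π (w true 0))) fun x => ?_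
  simp [Meets, walk_succ', h0]

variable [Fintype ι] [DecidableEq ι]

theorem expect_card_pairVisits_lt_card_pairSteps_le (w : Bool → ℕ → ι) (hL : 1 ≤ L)
    (hkL : ((2 * Fintype.card τ * (k + 1) : ℕ) : ℝ) ≤ L) (hn : 2 * L ^ 2 ≤ Fintype.card α) :
    𝔼 π : ι → Perm α, (#{x : τ ↪ α | #(pairVisits π w x k) < #(pairSteps π w x k)} : ℝ) ≤
      Real.exp 1 * (2 * L ^ 2) ^ (Fintype.card τ + 1) / Fintype.card α := by
  classical
  have hn0 : (0 : ℝ) < Fintype.card α := lt_of_lt_of_le (by positivity) hn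
  have hdens (x : τ ↪ α) :
      (dens {π : ι → Perm α | #(pairVisits π w x k) < #(pairSteps π w x k)} : ℝ) ≤
        Real.exp 1 * (2 * L ^ 2 / Fintype.card α) ^ (Fintype.card τ + 1) := by
    have hcard : Fintype.card τ ≤ #(univ.image fun z : τ × Bool => x z.1) := by
      rw [← card_univ, ← card_map x]
      exact card_le_card fun a => by simp
    refine (dens_card_visits_lt_card_steps_le _ _ hL ?_ hn).trans ?_
    · simpa [mul_comm, mul_left_comm] using hkL
    · gcongr ?_ * ?_
      exact pow_le_pow_of_le_one (by positivity) ((div_le_one hn0).2 hn) (by omega)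
  calc _ = ∑ x : τ ↪ α,
          (dens {π : ι → Perm α | #(pairVisits π w x k) < #(pairSteps π w x k)} : ℝ) :=
        expect_card_filter_eq_sum_dens _
    _ ≤ Fintype.card (τ ↪ α) •
          (Real.exp 1 * (2 * L ^ 2 / Fintype.card α) ^ (Fintype.card τ + 1)) :=
        sum_le_card_nsmul _ _ _ fun x _ => hdens x
    _ ≤ (Fintype.card α : ℝ) ^ Fintype.card τ *
          (Real.exp 1 * (2 * L ^ 2 / Fintype.card α) ^ (Fintype.card τ + 1)) := by
        rw [nsmul_eq_mul]
        gcongr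
        exact card_embedding_le_pow
    _ = _ := by
        rw [div_pow, pow_succ (Fintype.card α : ℝ)]
        field_simp

theorem expect_card_meets_le_of_ends_ne (h0 : w false 0 ≠ w true 0) (hk : w false k ≠ w true k)
    (hL : 1 ≤ L) (hkL : ((2 * Fintype.card τ * (k + 2) : ℕ) : ℝ) ≤ L)
    (hn : 2 * L ^ 2 ≤ Fintype.card α) :
    𝔼 π : ι → Perm α, (#{x : τ ↪ α | Meets π w x (k + 1)} : ℝ) ≤
      1 + Real.exp 1 * (2 * L ^ 2) ^ (Fintype.card τ + 1) / Fintype.card α := by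
  classical
  calc _ ≤ 𝔼 π : ι → Perm α, ((#{x : τ ↪ α | Meets π w x (k + 1) ∧
          #(pairSteps π w x (k + 1)) ≤ #(pairVisits π w x (k + 1))} : ℝ) +
        #{x : τ ↪ α | #(pairVisits π w x (k + 1)) < #(pairSteps π w x (k + 1))}) := by
        refine expect_le_expect fun π _ => ?_
        refine le_trans (Nat.cast_le.2 (card_le_card fun x hx => ?_))
          (by exact_mod_cast card_union_le _ _)
        obtain hle | hlt := le_or_gt #(pairSteps π w x (k + 1)) #(pairVisits π w x (k + 1))
        · exact mem_union_left _ (mem_filter.2 ⟨mem_univ _, (mem_filter.1 hx).2, hle⟩)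
        · exact mem_union_right _ (mem_filter.2 ⟨mem_univ _, hlt⟩)
    _ ≤ _ := by
        rw [expect_add_distrib, expect_card_filter_eq_card_div]
        gcongr
        · exact div_le_one_of_le₀ (by exact_mod_cast card_meets_and_card_pairSteps_le h0 hk)
            (Nat.cast_nonneg _)
        · exact expect_card_pairVisits_lt_card_pairSteps_le w hL hkL hn

theorem expect_card_meets_le {K : ℕ} (hw : ∃ t < k, w false t ≠ w true t) (hkK : k ≤ K)
    (hL : 1 ≤ L) (hKL : ((2 * Fintype.card τ * (K + 1) : ℕ) : ℝ) ≤ L)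
    (hn : 2 * L ^ 2 ≤ Fintype.card α) :
    𝔼 π : ι → Perm α, (#{x : τ ↪ α | Meets π w x k} : ℝ) ≤
      1 + Real.exp 1 * (2 * L ^ 2) ^ (Fintype.card τ + 1) / Fintype.card α := by
  induction k generalizing w with
  | zero => simp at hw
  | succ k ih =>
    obtain ⟨t, ht, hne⟩ := hw
    by_cases h0 : w false 0 = w true 0
    · obtain ⟨t, rfl⟩ := Nat.exists_eq_succ_of_ne_zero fun h : t = 0 => hne (h ▸ h0)
      simp only [card_meets_succ_of_head_eq _ h0]
      exact ih ⟨t, Nat.lt_of_succ_lt_succ ht, hne⟩ (by omega)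
    by_cases hk : w false k = w true k
    · have htk : t ≠ k := fun h => hne (h ▸ hk)
      simp only [meets_succ_iff_of_last_eq hk]
      exact ih ⟨t, by omega, hne⟩ (by omega)
    · refine expect_card_meets_le_of_ends_ne h0 hk hL (le_trans ?_ hKL) hn
      exact Nat.cast_le.2 (Nat.mul_le_mul_left _ (by omega))

end Collisions

section Mixing

theorem sub_pow_succ_of_mul_eq {R : Type*} [Ring R] {t e : R} (hte : t * e = e) (het : e * t = e)
    (hee : e * e = e) (m : ℕ) : (t - e) ^ (m + 1) = t ^ (m + 1) - e := by
  have hpow (m : ℕ) : t ^ m * e = e := by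
    induction m with
    | zero => rw [pow_zero, one_mul]
    | succ m ih => rw [pow_succ, mul_assoc, hte, ih]
  induction m with
  | zero => rw [zero_add, pow_one, pow_one]
  | succ m ih => rw [pow_succ, ih, sub_mul, mul_sub, mul_sub, ← pow_succ, hpow, het, hee]; abel

theorem norm_sq_eq_sum {X : Type*} [Fintype X] (M : Matrix X X ℝ) :
    ‖M‖ ^ 2 = ∑ x, ∑ y, M x y ^ 2 := by
  rw [Matrix.frobenius_norm_def, ← Real.sqrt_eq_rpow, Real.sq_sqrt (by positivity)]
  simp

theorem abs_apply_le_norm {X : Type*} [Fintype X] (M : Matrix X X ℝ) (x y : X) :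
    |M x y| ≤ ‖M‖ := by
  refine abs_le_of_sq_le_sq ?_ (norm_nonneg M)
  rw [norm_sq_eq_sum]
  calc M x y ^ 2 ≤ ∑ y, M x y ^ 2 :=
        single_le_sum (fun y _ => sq_nonneg (M x y)) (mem_univ y)
    _ ≤ ∑ x, ∑ y, M x y ^ 2 :=
        single_le_sum (f := fun x => ∑ y, M x y ^ 2) (fun _ _ => by positivity) (mem_univ x)

/-- The transition matrix of the walk that jumps to a uniformly random point of `X`. -/
noncomputable def uniformMatrix (X : Type*) [Fintype X] : Matrix X X ℝ :=
  fun _ _ => (Fintype.card X : ℝ)⁻¹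

theorem uniformMatrix_mul_self {X : Type*} [Fintype X] :
    uniformMatrix X * uniformMatrix X = uniformMatrix X := by
  ext x y
  have := Fintype.card_pos_iff.2 ⟨x⟩
  simp [Matrix.mul_apply, uniformMatrix, this.ne']

variable {G X Ω : Type*} [Group G] [MulAction G X] [DecidableEq X] [Fintype Ω]

/-- The transition matrix on `X` of one step of the random walk by the random element `g` of `G`
acting on `X`. -/
noncomputable def transitionMatrix (X : Type*) [MulAction G X] [DecidableEq X] (g : Ω → G) :
    Matrix X X ℝ :=
  fun x y => 𝔼 ω, if g ω • x = y then 1 else 0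

theorem transitionMatrix_apply (g : Ω → G) (x y : X) :
    transitionMatrix X g x y = 𝔼 ω, if g ω • x = y then 1 else 0 := rfl

variable [Fintype X]

theorem sum_transitionMatrix_row [Nonempty Ω] (g : Ω → G) (x : X) :
    ∑ y, transitionMatrix X g x y = 1 := by
  simp [transitionMatrix_apply, ← expect_sum_comm]

theorem sum_transitionMatrix_col [Nonempty Ω] (g : Ω → G) (y : X) :
    ∑ x, transitionMatrix X g x y = 1 := by
  simp [transitionMatrix_apply, ← expect_sum_comm, smul_eq_iff_eq_inv_smul]

theorem transitionMatrix_mul_uniformMatrix [Nonempty Ω] (g : Ω → G) :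
    transitionMatrix X g * uniformMatrix X = uniformMatrix X := by
  ext x y
  simp only [Matrix.mul_apply, uniformMatrix, ← sum_mul, sum_transitionMatrix_row, one_mul]

theorem uniformMatrix_mul_transitionMatrix [Nonempty Ω] (g : Ω → G) :
    uniformMatrix X * transitionMatrix X g = uniformMatrix X := by
  ext x y
  simp only [Matrix.mul_apply, uniformMatrix, ← mul_sum, sum_transitionMatrix_col, mul_one]

theorem sum_transitionMatrix_sq (g : Ω → G) :
    ∑ x, ∑ y, transitionMatrix X g x y ^ 2 =
      𝔼 ω, 𝔼 ω', (#{x : X | g ω • x = g ω' • x} : ℝ) := by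
  simp only [card_filter, Nat.cast_sum, Nat.cast_ite, Nat.cast_one, Nat.cast_zero, expect_sum_comm,
    transitionMatrix_apply, sq, Fintype.expect_mul_expect]
  refine sum_congr rfl fun x _ => ?_
  simp only [← expect_sum_comm]
  refine expect_congr rfl fun ω _ => expect_congr rfl fun ω' _ => ?_
  simp [eq_comm]

theorem norm_transitionMatrix_sub_uniformMatrix_sq [Nonempty Ω] [Nonempty X] (g : Ω → G) :
    ‖transitionMatrix X g - uniformMatrix X‖ ^ 2 =
      (𝔼 ω, 𝔼 ω', (#{x : X | g ω • x = g ω' • x} : ℝ)) - 1 := by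
  rw [norm_sq_eq_sum, ← sum_transitionMatrix_sq]
  simp only [Matrix.sub_apply, sub_sq, sum_add_distrib, sum_sub_distrib, uniformMatrix, ← sum_mul,
    ← mul_sum, sum_transitionMatrix_row, sum_const, card_univ, nsmul_eq_mul]
  have : (Fintype.card X : ℝ) ≠ 0 := by simp
  field_simp
  ring

theorem exists_mem_range_pow_smul_eq_of_pow_apply_ne_zero {g : Ω → G} {m : ℕ} {x y : X}
    (h : (transitionMatrix X g ^ m) x y ≠ 0) : ∃ σ ∈ Set.range g ^ m, σ • x = y := by
  induction m generalizing y with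
  | zero =>
    refine ⟨1, by simp, ?_⟩
    rw [one_smul]
    by_contra hxy
    simp [Matrix.one_apply_ne hxy] at h
  | succ m ih =>
    rw [pow_succ, Matrix.mul_apply] at h
    obtain ⟨z, -, hz⟩ := exists_ne_zero_of_sum_ne_zero h
    obtain ⟨σ, hσ, rfl⟩ := ih (left_ne_zero_of_mul hz)
    obtain ⟨ω, -, hω⟩ := exists_ne_zero_of_expect_ne_zero (right_ne_zero_of_mul hz)
    refine ⟨g ω * σ, pow_succ' (Set.range g) m ▸ Set.mul_mem_mul ⟨ω, rfl⟩ hσ, ?_⟩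
    rw [mul_smul]
    by_contra hne
    exact hω (if_neg hne)

theorem exists_mem_range_pow_smul_eq_of_norm_pow_lt [Nonempty Ω] {g : Ω → G} {m : ℕ}
    (h : ‖transitionMatrix X g - uniformMatrix X‖ ^ (m + 1) < (Fintype.card X : ℝ)⁻¹) (x y : X) :
    ∃ σ ∈ Set.range g ^ (m + 1), σ • x = y := by
  refine exists_mem_range_pow_smul_eq_of_pow_apply_ne_zero fun h0 => h.not_ge ?_
  have hpow := sub_pow_succ_of_mul_eq (transitionMatrix_mul_uniformMatrix (X := X) g)
    (uniformMatrix_mul_transitionMatrix g) uniformMatrix_mul_self m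
  calc (Fintype.card X : ℝ)⁻¹ =
        |((transitionMatrix X g - uniformMatrix X) ^ (m + 1)) x y| := by
        rw [hpow, Matrix.sub_apply, h0, zero_sub, abs_neg, uniformMatrix, abs_of_nonneg]
        positivity
    _ ≤ ‖(transitionMatrix X g - uniformMatrix X) ^ (m + 1)‖ := abs_apply_le_norm _ x y
    _ ≤ _ := norm_pow_le' _ m.succ_pos

end Mixing

section RandomWords

variable {ι τ α : Type*}

/-- The composition of the letters of a word `f` of length `K`, evaluated at the permutations `π`.
The arbitrary letter that extends `f` to an infinite word is never read. -/
noncomputable def wordProd [Nonempty ι] (π : ι → Perm α) {K : ℕ} (f : Fin K → ι) : Perm α :=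
  walk π (Function.extend Fin.val f fun _ => Classical.arbitrary ι) K

/-- Any two `τ`-tuples of distinct points are connected by a product of exactly `m` of the
permutations `π`. -/
def ConnectsTuples (τ : Type*) (π : ι → Perm α) (m : ℕ) : Prop :=
  ∀ x y : τ ↪ α, ∃ σ ∈ Set.range π ^ m, σ • x = y

theorem range_wordProd_subset [Nonempty ι] (π : ι → Perm α) (K : ℕ) :
    Set.range (wordProd π (K := K)) ⊆ Set.range π ^ K :=
  Set.range_subset_iff.2 fun _ => walk_mem_range_pow π _ K

theorem exists_list_of_mem_range_pow {π : ι → Perm α} {σ : Perm α} {m : ℕ}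
    (h : σ ∈ Set.range π ^ m) :
    ∃ w : List (Perm α), (∀ ρ ∈ w, ∃ j, ρ = π j) ∧ w.length = m ∧
      ∀ a, permWordAction w a = σ a := by
  induction m generalizing σ with
  | zero =>
    obtain rfl : σ = 1 := by simpa using h
    exact ⟨[], by simp, rfl, fun _ => rfl⟩
  | succ m ih =>
    rw [pow_succ'] at h
    obtain ⟨_, ⟨j, rfl⟩, ρ, hρ, rfl⟩ := h
    obtain ⟨w, hw, rfl, hwρ⟩ := ih hρ
    refine ⟨w ++ [π j], ?_, by simp, fun a => ?_⟩
    · simpa [or_imp, forall_and] using hw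
    · simpa [permWordAction] using congrArg (π j) (hwρ a)

theorem wordProd_smul_eq_iff [Nonempty ι] {K : ℕ} (π : ι → Perm α) (f : Bool → Fin K → ι)
    (x : τ ↪ α) :
    wordProd π (f false) • x = wordProd π (f true) • x ↔
      Meets π (fun s => Function.extend Fin.val (f s) fun _ => Classical.arbitrary ι) x K :=
  DFunLike.ext_iff

theorem ConnectsTuples.exists_list {π : ι → Perm α} {m : ℕ} (h : ConnectsTuples τ π m)
    (x y : τ ↪ α) :
    ∃ w : List (Perm α), (∀ σ ∈ w, ∃ j, σ = π j) ∧ w.length = m ∧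
      ∀ i, permWordAction w (x i) = y i := by
  obtain ⟨σ, hσ, rfl⟩ := h x y
  obtain ⟨w, hmem, hlen, hw⟩ := exists_list_of_mem_range_pow hσ
  exact ⟨w, hmem, hlen, fun i => hw (x i)⟩

variable [Fintype ι] [Nonempty ι] [Fintype τ] [Fintype α] [DecidableEq α] {K : ℕ} {L : ℝ}

theorem expect_card_wordProd_smul_eq_le [DecidableEq ι] (hL : 1 ≤ L)
    (hKL : ((2 * Fintype.card τ * (K + 1) : ℕ) : ℝ) ≤ L) (hn : 2 * L ^ 2 ≤ Fintype.card α)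
    {f g : Fin K → ι} (hfg : f ≠ g) :
    𝔼 π : ι → Perm α, (#{x : τ ↪ α | wordProd π f • x = wordProd π g • x} : ℝ) ≤
      1 + Real.exp 1 * (2 * L ^ 2) ^ (Fintype.card τ + 1) / Fintype.card α := by
  obtain ⟨t, ht⟩ := Function.ne_iff.1 hfg
  convert expect_card_meets_le (τ := τ) (α := α)
    (w := fun s => Function.extend Fin.val (cond s g f) fun _ => Classical.arbitrary ι)
    ⟨t, t.2, ?_⟩ le_rfl hL hKL hn using 6 with π _
  · exact wordProd_smul_eq_iff π (fun s => cond s g f) _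
  · simpa [Fin.val_injective.extend_apply] using ht

theorem expect_expect_card_wordProd_smul_eq_le [DecidableEq ι] (hL : 1 ≤ L)
    (hKL : ((2 * Fintype.card τ * (K + 1) : ℕ) : ℝ) ≤ L) (hn : 2 * L ^ 2 ≤ Fintype.card α)
    (hK : Fintype.card α ^ (Fintype.card τ + 1) ≤ Fintype.card ι ^ K) :
    (𝔼 f : Fin K → ι, 𝔼 g : Fin K → ι, 𝔼 π : ι → Perm α,
        (#{x : τ ↪ α | wordProd π f • x = wordProd π g • x} : ℝ)) ≤
      1 / Fintype.card α +
        (1 + Real.exp 1 * (2 * L ^ 2) ^ (Fintype.card τ + 1) / Fintype.card α) := by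
  classical
  have hn0 : (0 : ℝ) < Fintype.card α := by nlinarith
  set ε : ℝ := Real.exp 1 * (2 * L ^ 2) ^ (Fintype.card τ + 1) / Fintype.card α
  have hpair (f g : Fin K → ι) :
      𝔼 π : ι → Perm α, (#{x : τ ↪ α | wordProd π f • x = wordProd π g • x} : ℝ) ≤
        (if f = g then (Fintype.card α : ℝ) ^ Fintype.card τ else 0) + (1 + ε) := by
    split_ifs with hfg
    · subst hfg
      simpa using (card_embedding_le_pow (τ := τ) (α := α)).trans
        (le_add_of_nonneg_right (by positivity : 0 ≤ 1 + ε))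
    · rw [zero_add]
      exact expect_card_wordProd_smul_eq_le hL hKL hn hfg
  calc _ ≤ 𝔼 f : Fin K → ι, 𝔼 g : Fin K → ι,
          ((if f = g then (Fintype.card α : ℝ) ^ Fintype.card τ else 0) + (1 + ε)) := by
        gcongr with f _ g
        exact hpair f g
    _ = (Fintype.card α : ℝ) ^ Fintype.card τ / (Fintype.card ι : ℝ) ^ K + (1 + ε) := by
        simp [expect_add_distrib, NNRat.smul_def, div_eq_inv_mul]
    _ ≤ 1 / Fintype.card α + (1 + ε) := by
        refine add_le_add_left ?_ _
        rw [div_le_div_iff₀ (by positivity) hn0, ← pow_succ, one_mul]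
        exact_mod_cast hK

theorem expect_norm_transitionMatrix_sub_uniformMatrix_sq_le [DecidableEq ι] (hL : 1 ≤ L)
    (hKL : ((2 * Fintype.card τ * (K + 1) : ℕ) : ℝ) ≤ L) (hn : 2 * L ^ 2 ≤ Fintype.card α)
    (hK : Fintype.card α ^ (Fintype.card τ + 1) ≤ Fintype.card ι ^ K) :
    𝔼 π : ι → Perm α,
        ‖transitionMatrix (τ ↪ α) (wordProd π (K := K)) - uniformMatrix (τ ↪ α)‖ ^ 2 ≤
      (1 + Real.exp 1 * (2 * L ^ 2) ^ (Fintype.card τ + 1)) / Fintype.card α := by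
  classical
  have hcard : (Fintype.card τ : ℝ) ≤ Fintype.card α := by
    push_cast at hKL
    nlinarith
  have : Nonempty (τ ↪ α) := Function.Embedding.nonempty_of_card_le (by exact_mod_cast hcard)
  calc _ = (𝔼 f : Fin K → ι, 𝔼 g : Fin K → ι, 𝔼 π : ι → Perm α,
          (#{x : τ ↪ α | wordProd π f • x = wordProd π g • x} : ℝ)) - 1 := by
        simp only [norm_transitionMatrix_sub_uniformMatrix_sq, expect_sub_distrib,
          Fintype.expect_const, expect_comm (s := (univ : Finset (ι → Perm α)))]
    _ ≤ 1 / Fintype.card α +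
          (1 + Real.exp 1 * (2 * L ^ 2) ^ (Fintype.card τ + 1) / Fintype.card α) - 1 := by
        gcongr
        exact expect_expect_card_wordProd_smul_eq_le hL hKL hn hK
    _ = _ := by ring

theorem connectsTuples_of_norm_sq_lt [Nonempty τ] {π : ι → Perm α}
    (h : ‖transitionMatrix (τ ↪ α) (wordProd π (K := K)) - uniformMatrix (τ ↪ α)‖ ^ 2 <
      1 / √(Fintype.card α)) :
    ConnectsTuples τ π (K * (4 * Fintype.card τ)) := by
  classical
  intro x y
  have : Nonempty α := ⟨x (Classical.arbitrary τ)⟩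
  have hτ : 0 < 4 * Fintype.card τ := by positivity
  obtain ⟨m, hm⟩ := Nat.exists_eq_succ_of_ne_zero hτ.ne'
  have hX0 : (0 : ℝ) < Fintype.card (τ ↪ α) := by exact_mod_cast Fintype.card_pos_iff.2 ⟨x⟩
  have hpow : ‖transitionMatrix (τ ↪ α) (wordProd π (K := K)) - uniformMatrix (τ ↪ α)‖ ^ (m + 1) <
      (Fintype.card (τ ↪ α) : ℝ)⁻¹ := calc
    _ = (‖transitionMatrix (τ ↪ α) (wordProd π (K := K)) - uniformMatrix (τ ↪ α)‖ ^ 2) ^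
          (2 * Fintype.card τ) := by rw [← pow_mul, ← Nat.succ_eq_add_one, ← hm]; ring_nf
    _ < (1 / √(Fintype.card α)) ^ (2 * Fintype.card τ) := by gcongr
    _ = ((Fintype.card α : ℝ) ^ Fintype.card τ)⁻¹ := by
        rw [pow_mul, div_pow, Real.sq_sqrt (Nat.cast_nonneg _), one_pow, one_div, inv_pow]
    _ ≤ (Fintype.card (τ ↪ α) : ℝ)⁻¹ := by
        gcongr
        exact card_embedding_le_pow
  obtain ⟨σ, hσ, hxy⟩ := exists_mem_range_pow_smul_eq_of_norm_pow_lt hpow x y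
  refine ⟨σ, ?_, hxy⟩
  rw [hm, pow_mul]
  exact Set.pow_subset_pow_left (range_wordProd_subset π K) hσ

open Classical in
theorem dens_not_connectsTuples_le [DecidableEq ι] [Nonempty τ] (hL : 1 ≤ L)
    (hKL : ((2 * Fintype.card τ * (K + 1) : ℕ) : ℝ) ≤ L) (hn : 2 * L ^ 2 ≤ Fintype.card α)
    (hK : Fintype.card α ^ (Fintype.card τ + 1) ≤ Fintype.card ι ^ K) :
    ((dens {π : ι → Perm α | ¬ ConnectsTuples τ π (K * (4 * Fintype.card τ))} : ℚ≥0) : ℝ) ≤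
      (1 + Real.exp 1 * (2 * L ^ 2) ^ (Fintype.card τ + 1)) / √(Fintype.card α) := by
  have hn0 : (0 : ℝ) < Fintype.card α := by nlinarith
  calc _ ≤ (𝔼 π : ι → Perm α, ‖transitionMatrix (τ ↪ α) (wordProd π (K := K)) -
          uniformMatrix (τ ↪ α)‖ ^ 2) / (1 / √(Fintype.card α)) := by
        refine dens_le_expect_div (by positivity) (fun π => sq_nonneg _) fun π hπ => ?_
        exact not_lt.1 fun h => (mem_filter_univ π).1 hπ (connectsTuples_of_norm_sq_lt h)
    _ ≤ (1 + Real.exp 1 * (2 * L ^ 2) ^ (Fintype.card τ + 1)) / Fintype.card α /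
          (1 / √(Fintype.card α)) := by
        gcongr
        exact expect_norm_transitionMatrix_sub_uniformMatrix_sq_le hL hKL hn hK
    _ = _ := by
        rw [div_div_eq_mul_div, div_one, div_mul_eq_mul_div, mul_div_assoc, Real.sqrt_div_self]
        rfl

end RandomWords

section Asymptotics

open Filter Topology

open Classical in
theorem tendsto_card_subtype_div_card_of_tendsto_dens_not {Ω : ℕ → Type*} [∀ n, Fintype (Ω n)]
    [∀ n, Nonempty (Ω n)] {P Q : ∀ n, Ω n → Prop} (hQP : ∀ᶠ n in atTop, ∀ ω, Q n ω → P n ω)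
    (hQ : Tendsto (fun n => (dens {ω | ¬ Q n ω} : ℝ)) atTop (𝓝 0)) :
    Tendsto (fun n => (Nat.card {ω // P n ω} : ℝ) / Nat.card (Ω n)) atTop (𝓝 1) := by
  rw [show 𝓝 (1 : ℝ) = 𝓝 (1 - 0) by rw [sub_zero]]
  simp only [card_subtype_div_card_eq_one_sub_dens]
  refine (squeeze_zero' (.of_forall fun n => NNRat.cast_nonneg _) ?_ hQ).const_sub 1
  filter_upwards [hQP] with n hn
  exact NNRat.cast_le.2 (dens_le_dens (monotone_filter_right _ fun ω _ => mt (hn ω)))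

/-- A word length for which words in at least two letters outnumber the `(r + 1)`-tuples in
`Fin n`. -/
def wordLength (r n : ℕ) : ℕ := (r + 1) * (Nat.log 2 n + 1)

theorem pow_succ_le_pow_wordLength {d : ℕ} (hd : 2 ≤ d) (r n : ℕ) :
    n ^ (r + 1) ≤ d ^ wordLength r n := calc
  n ^ (r + 1) ≤ (2 ^ (Nat.log 2 n + 1)) ^ (r + 1) :=
    Nat.pow_le_pow_left (Nat.lt_pow_succ_log_self one_lt_two n).le _
  _ = 2 ^ wordLength r n := by rw [← pow_mul, wordLength, mul_comm]
  _ ≤ d ^ wordLength r n := Nat.pow_le_pow_left hd _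

theorem eventually_one_le_log : ∀ᶠ n : ℕ in atTop, 1 ≤ Real.log n :=
  (Real.tendsto_log_atTop.comp tendsto_natCast_atTop_atTop).eventually_ge_atTop 1

theorem eventually_wordLength_le (r : ℕ) :
    ∀ᶠ n : ℕ in atTop, (wordLength r n : ℝ) ≤ 3 * (r + 1) * Real.log n := by
  filter_upwards [eventually_one_le_log, eventually_ge_atTop 1] with n hlog hn
  have hnatlog : (Nat.log 2 n : ℝ) * Real.log 2 ≤ Real.log n := by
    rw [← Real.log_pow]
    exact Real.log_le_log (by positivity) (by exact_mod_cast Nat.pow_log_le_self 2 (by omega))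
  have htwo : (Nat.log 2 n : ℝ) ≤ 2 * Real.log n := by
    nlinarith [Real.log_two_gt_d9, Nat.cast_nonneg (α := ℝ) (Nat.log 2 n)]
  calc (wordLength r n : ℝ) = (r + 1) * (Nat.log 2 n + 1) := by simp [wordLength]
    _ ≤ (r + 1) * (3 * Real.log n) := by gcongr; linarith
    _ = 3 * (r + 1) * Real.log n := by ring

theorem tendsto_log_pow_div_sqrt (p : ℕ) :
    Tendsto (fun n : ℕ => Real.log n ^ p / √n) atTop (𝓝 0) := by
  have h := (Real.isLittleO_pow_log_id_atTop (n := p)).tendsto_div_nhds_zero.comp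
    (Real.tendsto_sqrt_atTop.comp tendsto_natCast_atTop_atTop)
  convert h.const_mul ((2 : ℝ) ^ p) using 1
  · ext n
    simp only [Function.comp_apply, id, Real.log_sqrt (Nat.cast_nonneg n), div_pow]
    field_simp
  · rw [mul_zero]

theorem tendsto_wordLength_add_one_pow_div_sqrt (r p : ℕ) :
    Tendsto (fun n : ℕ => ((wordLength r n : ℝ) + 1) ^ p / √n) atTop (𝓝 0) := by
  have h := (tendsto_log_pow_div_sqrt p).const_mul ((3 * (r + 1) + 1 : ℝ) ^ p)
  rw [mul_zero] at h
  refine squeeze_zero' (Eventually.of_forall fun n => by positivity) ?_ h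
  filter_upwards [eventually_one_le_log, eventually_wordLength_le r] with n hlog hK
  rw [← mul_div_assoc, ← mul_pow]
  gcongr
  linarith

theorem eventually_two_mul_sq_le (r : ℕ) :
    ∀ᶠ n : ℕ in atTop, 2 * (2 * r * ((wordLength r n : ℝ) + 1)) ^ 2 ≤ n := by
  have h := (tendsto_wordLength_add_one_pow_div_sqrt r 2).const_mul (8 * (r : ℝ) ^ 2)
  rw [mul_zero] at h
  filter_upwards [h.eventually_lt_const one_pos, eventually_ge_atTop 1] with n hlt hn
  rw [← mul_div_assoc, div_lt_one (by positivity)] at hlt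
  calc 2 * (2 * r * ((wordLength r n : ℝ) + 1)) ^ 2
        = 8 * r ^ 2 * ((wordLength r n : ℝ) + 1) ^ 2 := by ring
    _ ≤ √n := hlt.le
    _ ≤ n := Real.sqrt_le_iff.2 ⟨by positivity, by exact_mod_cast Nat.le_self_pow two_ne_zero n⟩

theorem tendsto_failure_bound (r : ℕ) :
    Tendsto (fun n : ℕ => (1 + Real.exp 1 *
      (2 * (2 * r * ((wordLength r n : ℝ) + 1)) ^ 2) ^ (r + 1)) / √n) atTop (𝓝 0) := by
  convert (tendsto_log_pow_div_sqrt 0).add ((tendsto_wordLength_add_one_pow_div_sqrt r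
    (2 * (r + 1))).const_mul (Real.exp 1 * (8 * (r : ℝ) ^ 2) ^ (r + 1))) using 1
  · ext n
    rw [pow_mul, ← mul_div_assoc, mul_assoc (Real.exp 1), ← mul_pow, pow_zero, ← add_div]
    ring_nf
  · simp

open Classical in
theorem tendsto_dens_not_connectsTuples {ι τ : Type*} [Fintype ι] [DecidableEq ι] [Fintype τ]
    [Nonempty τ] (hι : 2 ≤ Fintype.card ι) :
    Tendsto (fun n : ℕ => ((dens {π : ι → Perm (Fin n) | ¬ ConnectsTuples τ π
      (wordLength (Fintype.card τ) n * (4 * Fintype.card τ))} : ℚ≥0) : ℝ)) atTop (𝓝 0) := by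
  have : Nonempty ι := Fintype.card_pos_iff.1 (by omega)
  have hτ : (1 : ℝ) ≤ Fintype.card τ := by exact_mod_cast Fintype.card_pos
  refine squeeze_zero' (Eventually.of_forall fun n => NNRat.cast_nonneg _) ?_
    (tendsto_failure_bound (Fintype.card τ))
  filter_upwards [eventually_two_mul_sq_le (Fintype.card τ)] with n hn
  have hL : (1 : ℝ) ≤ 2 * Fintype.card τ * (wordLength (Fintype.card τ) n + 1) := by
    nlinarith [Nat.cast_nonneg (α := ℝ) (wordLength (Fintype.card τ) n)]
  have h := dens_not_connectsTuples_le (ι := ι) (τ := τ) (α := Fin n)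
    (K := wordLength (Fintype.card τ) n)
    (L := 2 * Fintype.card τ * (wordLength (Fintype.card τ) n + 1)) hL
    (by push_cast; rfl) (by simpa using hn) (by simpa using pow_succ_le_pow_wordLength hι _ n)
  simpa using h

end Asymptotics

end RandomPermutation

/-- For every `r ≥ 1` and `d ≥ 2` there is a constant `C > 0` such that, for `d`
independent uniformly random permutations `π 0, …, π (d-1)` of `Fin n` (i.e. `π`
uniform on `Fin d → Equiv.Perm (Fin n)`), the following holds with probability
tending to `1` as `n → ∞`: for any two `r`-tuples of pairwise distinct elements of
`Fin n`, there is a sequence of at most `C * log n` of the given permutations whose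
composition maps the first tuple to the second, coordinatewise. -/
theorem random_permutations_transitive_on_tuples :
    ∀ r d : ℕ, 1 ≤ r → 2 ≤ d →
      ∃ C : ℝ, 0 < C ∧
        Filter.Tendsto
          (fun n : ℕ =>
            (Nat.card {π : Fin d → Equiv.Perm (Fin n) //
                ∀ x y : Fin r → Fin n, Function.Injective x → Function.Injective y →
                  ∃ w : List (Equiv.Perm (Fin n)),
                    (∀ σ ∈ w, ∃ j : Fin d, σ = π j) ∧
                    (w.length : ℝ) ≤ C * Real.log n ∧
                    ∀ i : Fin r, permWordAction w (x i) = y i} : ℝ) /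
            (Nat.card (Fin d → Equiv.Perm (Fin n)) : ℝ))
          Filter.atTop (nhds 1) := by
  intro r d hr hd
  have : Nonempty (Fin r) := ⟨⟨0, hr⟩⟩
  refine ⟨3 * (r + 1) * (4 * r), by positivity, ?_⟩
  have hconn := RandomPermutation.tendsto_dens_not_connectsTuples (ι := Fin d) (τ := Fin r)
    (by simpa using hd)
  refine RandomPermutation.tendsto_card_subtype_div_card_of_tendsto_dens_not ?_ hconn
  filter_upwards [RandomPermutation.eventually_wordLength_le r] with n hlen π hπ x y hx hy
  obtain ⟨w, hmem, hw, hmaps⟩ := hπ.exists_list ⟨x, hx⟩ ⟨y, hy⟩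
  refine ⟨w, hmem, ?_, hmaps⟩
  calc (w.length : ℝ) = RandomPermutation.wordLength r n * (4 * r) := by simp [hw]
    _ ≤ 3 * (r + 1) * Real.log n * (4 * r) := by gcongr
    _ = 3 * (r + 1) * (4 * r) * Real.log n := by ring
end
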